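/- arXiv:2309.07905 — 4 statements merged into one kernel-verified Lean document; each statement's English description precedes it below -/
import Mathlib

section
/- There exist a simple graph G of maximum degree at most three, sets X, Y ⊆ V(G), and a collection of five pairwise disjoint X-Y-paths in G, such that G contains no two pairwise non-adjacent X-Y-paths. (An example: take vertex sets X and Y each of size five, let G[X] be a 5-cycle, let G[Y] be the complement of a 5-cycle, and join X to Y by a perfect matching matching each vertex of the 5-cycle to the corresponding vertex of its complement.) -/
open SimpleGraph

universe u

variable {V : Type u}

/-- A packaged walk in `G`: a pair of endpoints together with a walk between them. -/
abbrev PathPkg (G : SimpleGraph V) : Type u := Σ x : V, Σ y : V, G.Walk x y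

/-- The set of vertices of a packaged walk. -/
def pkgSupport {G : SimpleGraph V} (p : PathPkg G) : Set V := {x | x ∈ p.2.2.support}

/-- The set of edges of a packaged walk. -/
def pkgEdges {G : SimpleGraph V} (p : PathPkg G) : Set (Sym2 V) := {e | e ∈ p.2.2.edges}

/-- `p` is an `X`-`Y`-path: a path whose first endpoint lies in `X` and whose
second endpoint lies in `Y`. -/
def IsXYPath (G : SimpleGraph V) (X Y : Set V) (p : PathPkg G) : Prop :=
  p.2.2.IsPath ∧ p.1 ∈ X ∧ p.2.1 ∈ Y

/-- Two packaged walks are (vertex-)disjoint. -/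
def PkgDisjoint {G : SimpleGraph V} (p q : PathPkg G) : Prop :=
  ∀ x, x ∈ pkgSupport p → x ∉ pkgSupport q

/-- Two packaged walks are non-adjacent: they are vertex-disjoint and no edge of `G`
joins a vertex of one to a vertex of the other. -/
def PkgNonAdj (G : SimpleGraph V) (p q : PathPkg G) : Prop :=
  ∀ a, a ∈ pkgSupport p → ∀ b, b ∈ pkgSupport q → a ≠ b ∧ ¬ G.Adj a b

/-- `Z` separates `X` and `Y` in `G`: every `X`-`Y`-path meets `Z`. -/
def XYSeparates (G : SimpleGraph V) (X Y Z : Set V) : Prop :=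
  ∀ p : PathPkg G, IsXYPath G X Y p → ∃ z, z ∈ Z ∧ z ∈ pkgSupport p

/-- `M` is an induced matching of `G`: a set of edges of `G` such that any two distinct
edges of `M` are at distance at least `2` in `G` (no endpoint of one equals or is
adjacent to an endpoint of the other). -/
def IsInducedMatching (G : SimpleGraph V) (M : Set (Sym2 V)) : Prop :=
  M ⊆ G.edgeSet ∧
    ∀ e₁, e₁ ∈ M → ∀ e₂, e₂ ∈ M → e₁ ≠ e₂ →
      ∀ a, a ∈ e₁ → ∀ b, b ∈ e₂ → a ≠ b ∧ ¬ G.Adj a b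

/-- `G` admits a partition of its edge set into `n` induced matchings
(a strong edge colouring with `n` colours). -/
def HasStrongEdgeColoring (G : SimpleGraph V) (n : ℕ) : Prop :=
  ∃ M : Fin n → Set (Sym2 V),
    (∀ i, IsInducedMatching G (M i)) ∧
    (Pairwise fun i j => Disjoint (M i) (M j)) ∧
    (⋃ i, M i) = G.edgeSet

/-- The strong chromatic index of `G`: the least number of induced matchings into
which the edge set of `G` can be partitioned. -/
noncomputable def strongChromaticIndex (G : SimpleGraph V) : ℕ :=
  sInf {n | HasStrongEdgeColoring G n}

/-- `G` contains the complete graph `K_r` as a topological minor: there are `r` distinct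
branch vertices joined pairwise by internally disjoint paths whose internal vertices
avoid all branch vertices. -/
def HasTopKMinor (G : SimpleGraph V) (r : ℕ) : Prop :=
  ∃ (f : Fin r → V) (P : (i j : Fin r) → i < j → G.Walk (f i) (f j)),
    Function.Injective f ∧
    (∀ i j hij, (P i j hij).IsPath) ∧
    (∀ i j hij x, x ∈ (P i j hij).support → x ≠ f i → x ≠ f j → ∀ l, x ≠ f l) ∧
    (∀ i j hij i' j' hij', (i, j) ≠ (i', j') →
      ∀ x, x ∈ (P i j hij).support → x ∈ (P i' j' hij').support →
        (x = f i ∨ x = f j) ∧ (x = f i' ∨ x = f j'))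

/-- `G` contains the complete graph `K_n` as a minor, witnessed by `n` nonempty,
pairwise disjoint, connected branch sets joined pairwise by edges. -/
def HasKMinor (G : SimpleGraph V) (n : ℕ) : Prop :=
  ∃ B : Fin n → Set V,
    (∀ i, (B i).Nonempty) ∧
    (∀ i, (G.induce (B i)).Connected) ∧
    (Pairwise fun i j => Disjoint (B i) (B j)) ∧
    (∀ i j, i ≠ j → ∃ a ∈ B i, ∃ b ∈ B j, G.Adj a b)

/-!
Let `G` be the Petersen graph, drawn as the complementary prism of the 5-cycle: a copy of `C₅` on
`X`, a copy of its complement on `Y`, and a perfect matching of rungs joining corresponding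
vertices. The five rungs are disjoint `X`-`Y`-paths. Every `X`-`Y`-path contains both ends of some
rung, and any two distinct rungs are joined by an edge, because distinct vertices are adjacent
either in a graph or in its complement. All this works for any graph in place of `C₅`; the 5-cycle
is chosen because both it and its complement are 2-regular, which makes `G` cubic.
-/

/-- The complementary prism of `H`: disjoint copies of `H` (on the `Sum.inl` side) and of its
complement (on the `Sum.inr` side), with the two copies of each vertex joined by an edge.
For the 5-cycle this is the Petersen graph. -/
def complementaryPrism (H : SimpleGraph V) : SimpleGraph (V ⊕ V) where
  Adj
    | .inl a, .inl b => H.Adj a b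
    | .inr a, .inr b => Hᶜ.Adj a b
    | .inl a, .inr b => a = b
    | .inr a, .inl b => a = b
  symm := ⟨by rintro (a | a) (b | b) hab <;> exact hab.symm⟩
  loopless := ⟨by rintro (a | a) haa <;> exact SimpleGraph.irrefl _ haa⟩

namespace complementaryPrism

section Adjacency

variable {H : SimpleGraph V} {a b : V}

@[simp]
lemma adj_inl_inl : (complementaryPrism H).Adj (.inl a) (.inl b) ↔ H.Adj a b := Iff.rfl

@[simp]
lemma adj_inr_inr : (complementaryPrism H).Adj (.inr a) (.inr b) ↔ Hᶜ.Adj a b := Iff.rfl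

@[simp]
lemma adj_inl_inr : (complementaryPrism H).Adj (.inl a) (.inr b) ↔ a = b := Iff.rfl

@[simp]
lemma adj_inr_inl : (complementaryPrism H).Adj (.inr a) (.inl b) ↔ a = b := Iff.rfl

end Adjacency

variable (H : SimpleGraph V)

lemma neighborSet_inl (a : V) :
    (complementaryPrism H).neighborSet (.inl a) = insert (.inr a) (.inl '' H.neighborSet a) := by
  ext (b | b) <;> simp [eq_comm]

lemma neighborSet_inr (a : V) :
    (complementaryPrism H).neighborSet (.inr a) = insert (.inl a) (.inr '' Hᶜ.neighborSet a) := by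
  ext (b | b) <;> simp [eq_comm]

lemma ncard_neighborSet_inl_le (a : V) :
    ((complementaryPrism H).neighborSet (.inl a)).ncard ≤ (H.neighborSet a).ncard + 1 := by
  rw [neighborSet_inl, ← Set.ncard_image_of_injective (H.neighborSet a) Sum.inl_injective]
  exact Set.ncard_insert_le _ _

lemma ncard_neighborSet_inr_le (a : V) :
    ((complementaryPrism H).neighborSet (.inr a)).ncard ≤ (Hᶜ.neighborSet a).ncard + 1 := by
  rw [neighborSet_inr, ← Set.ncard_image_of_injective (Hᶜ.neighborSet a) Sum.inr_injective]
  exact Set.ncard_insert_le _ _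

/-- The rung of the complementary prism at `a`: the one-edge path joining the two copies of `a`. -/
def rung (a : V) : PathPkg (complementaryPrism H) :=
  ⟨.inl a, .inr a, (adj_inl_inr.2 rfl).toWalk⟩

lemma isXYPath_rung (a : V) :
    IsXYPath (complementaryPrism H) (Set.range .inl) (Set.range .inr) (rung H a) :=
  ⟨(adj_inl_inr.2 rfl).isPath_toWalk, Set.mem_range_self a, Set.mem_range_self a⟩

lemma pkgSupport_rung (a : V) : pkgSupport (rung H a) = {.inl a, .inr a} := by
  ext x
  simp [pkgSupport, rung]

lemma pairwise_pkgDisjoint_rung :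
    Pairwise fun a b => PkgDisjoint (rung H a) (rung H b) := by
  intro a b hab x hxa hxb
  rw [pkgSupport_rung] at hxa hxb
  rcases hxa with rfl | rfl <;> simp [hab] at hxb

variable {H}

lemma exists_pkgSupport_rung_subset {p : PathPkg (complementaryPrism H)}
    (hp : IsXYPath (complementaryPrism H) (Set.range .inl) (Set.range .inr) p) :
    ∃ a, pkgSupport (rung H a) ⊆ pkgSupport p := by
  obtain ⟨-, hfirst, ⟨y, hlast⟩⟩ := hp
  obtain ⟨⟨⟨u, v⟩, huv⟩, hdart, ⟨a, rfl⟩, hv⟩ :=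
    p.2.2.exists_boundary_dart (Set.range Sum.inl) hfirst (by simp [← hlast])
  obtain ⟨b, rfl⟩ : v ∈ Set.range Sum.inr := by simpa [← Set.compl_range_inl] using hv
  obtain rfl : a = b := adj_inl_inr.1 huv
  refine ⟨a, ?_⟩
  rw [pkgSupport_rung, Set.pair_subset_iff]
  exact ⟨p.2.2.dart_fst_mem_support_of_mem_darts hdart,
    p.2.2.dart_snd_mem_support_of_mem_darts hdart⟩

lemma not_pkgNonAdj_rung (a b : V) :
    ¬ PkgNonAdj (complementaryPrism H) (rung H a) (rung H b) := by
  intro hnonadj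
  simp only [PkgNonAdj, pkgSupport_rung] at hnonadj
  obtain ⟨hne, hadj⟩ := hnonadj (.inl a) (by simp) (.inl b) (by simp)
  have hadj_compl := (hnonadj (.inr a) (by simp) (.inr b) (by simp)).2
  have hab : a ≠ b := fun h => hne (congrArg Sum.inl h)
  exact hadj_compl ((compl_adj H a b).2 ⟨hab, hadj⟩)

theorem not_pkgNonAdj {p q : PathPkg (complementaryPrism H)}
    (hp : IsXYPath (complementaryPrism H) (Set.range .inl) (Set.range .inr) p)
    (hq : IsXYPath (complementaryPrism H) (Set.range .inl) (Set.range .inr) q) :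
    ¬ PkgNonAdj (complementaryPrism H) p q := by
  intro hpq
  obtain ⟨a, ha⟩ := exists_pkgSupport_rung_subset hp
  obtain ⟨b, hb⟩ := exists_pkgSupport_rung_subset hq
  exact not_pkgNonAdj_rung a b fun x hx y hy => hpq x (ha hx) y (hb hy)

end complementaryPrism

lemma ncard_neighborSet_cycleGraph {n : ℕ} (a : Fin (n + 3)) :
    ((cycleGraph (n + 3)).neighborSet a).ncard = 2 := by
  rw [Set.ncard_eq_toFinset_card', ← neighborFinset, card_neighborFinset_eq_degree,
    cycleGraph_degree_three_le]

lemma ncard_neighborSet_compl_cycleGraph {n : ℕ} (a : Fin (n + 3)) :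
    ((cycleGraph (n + 3))ᶜ.neighborSet a).ncard = n := by
  rw [Set.ncard_eq_toFinset_card', ← neighborFinset, card_neighborFinset_eq_degree,
    degree_compl, cycleGraph_degree_three_le, Fintype.card_fin]
  rfl

lemma ncard_neighborSet_complementaryPrism_cycleGraph_five_le (v : Fin 5 ⊕ Fin 5) :
    ((complementaryPrism (cycleGraph 5)).neighborSet v).ncard ≤ 3 := by
  rcases v with a | a
  · exact (complementaryPrism.ncard_neighborSet_inl_le _ a).trans_eq
      (congrArg (· + 1) (ncard_neighborSet_cycleGraph a))
  · exact (complementaryPrism.ncard_neighborSet_inr_le _ a).trans_eq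
      (congrArg (· + 1) (ncard_neighborSet_compl_cycleGraph a))

theorem statement_9 :
    ∃ (W : Type) (G : SimpleGraph W) (X Y : Set W) (P : Fin 5 → PathPkg G),
      (∀ v, (G.neighborSet v).Finite ∧ (G.neighborSet v).ncard ≤ 3) ∧
      (∀ i, IsXYPath G X Y (P i)) ∧
      (Pairwise fun i j => PkgDisjoint (P i) (P j)) ∧
      ¬ ∃ p q : PathPkg G, IsXYPath G X Y p ∧ IsXYPath G X Y q ∧ PkgNonAdj G p q := by
  refine ⟨Fin 5 ⊕ Fin 5, complementaryPrism (cycleGraph 5), Set.range .inl, Set.range .inr,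
    complementaryPrism.rung (cycleGraph 5), fun v => ⟨Set.toFinite _, ?_⟩,
    complementaryPrism.isXYPath_rung _, complementaryPrism.pairwise_pkgDisjoint_rung _, ?_⟩
  · exact ncard_neighborSet_complementaryPrism_cycleGraph_five_le v
  · rintro ⟨p, q, hp, hq, hpq⟩
    exact complementaryPrism.not_pkgNonAdj hp hq hpq
end

section
/- For every natural number k ≥ 2, there exist a simple graph G, sets X, Y ⊆ V(G), and a collection 𝒫 of 4(k−1) pairwise disjoint X-Y-paths in G such that every vertex of V(𝒫) is incident to at most one edge of E(G) \ E(𝒫), and yet G contains no k pairwise non-adjacent X-Y-paths. -/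
open SimpleGraph

universe u

variable {V : Type u}

/-!
A graph with four disjoint paths and no two non-adjacent `X`-`Y`-paths is enough: in `k - 1`
disjoint copies of it, two of any `k` `X`-`Y`-paths lie in the same copy.

Such a graph is the `web`: four strands `A`, `B`, `C`, `D` of eight vertices each, joined by a
perfect matching. Suppose it had two non-adjacent paths, and let `P`, `Q` be their vertex sets,
trimmed to meet `X` and `Y` only in their ends. A vertex of `P` other than an end has at least two
of its three neighbours in `P`, so once one neighbour is excluded, the other two are forced.
Starting from `X`, this propagation determines how `P` and `Q` leave the left half of the `web`
(`IsLeftPattern`). The `web` has an automorphism of order four that interchanges `X` and `Y`, so the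
same is known about the right half, and the two descriptions contradict each other in the middle.
-/

/-! ### Threads -/

/-- The local trace of an `X`-`Y`-path on its vertex set `S`: one vertex in `X`, one in `Y`, and
enough neighbours inside `S` to continue at every vertex. Connectedness is not required. -/
structure IsThread (G : SimpleGraph V) (X Y S : Set V) : Prop where
  existsUnique_source : ∃! x, x ∈ S ∧ x ∈ X
  existsUnique_target : ∃! y, y ∈ S ∧ y ∈ Y
  nonempty_neighbors : ∀ v ∈ S, (G.neighborSet v ∩ S).Nonempty
  nontrivial_neighbors : ∀ v ∈ S, v ∉ X → v ∉ Y → (G.neighborSet v ∩ S).Nontrivial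

section Thread

variable {G : SimpleGraph V} {X Y S : Set V}

lemma exists_isXYPath_meeting_only_in_ends (p : PathPkg G) (hp : IsXYPath G X Y p) :
    ∃ q, IsXYPath G X Y q ∧ pkgSupport q ⊆ pkgSupport p ∧
      (∀ v ∈ pkgSupport q, v ∈ X → v = q.1) ∧ ∀ v ∈ pkgSupport q, v ∈ Y → v = q.2.1 := by
  classical
  induction hn : p.2.2.length using Nat.strong_induction_on generalizing p with
  | _ n ih =>
    obtain ⟨x, y, p⟩ := p
    obtain ⟨hpath, hx, hy⟩ := hp
    subst hn
    by_cases hX : ∃ v ∈ p.support, v ∈ X ∧ v ≠ x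
    · obtain ⟨v, hv, hvX, hvx⟩ := hX
      obtain ⟨q, hq, hsub, hends⟩ := ih _ (Walk.length_dropUntil_lt_length hv hvx)
        ⟨v, y, p.dropUntil v hv⟩ ⟨hpath.dropUntil hv, hvX, hy⟩ rfl
      exact ⟨q, hq, hsub.trans (p.support_dropUntil_subset_support hv), hends⟩
    by_cases hY : ∃ v ∈ p.support, v ∈ Y ∧ v ≠ y
    · obtain ⟨v, hv, hvY, hvy⟩ := hY
      obtain ⟨q, hq, hsub, hends⟩ := ih _ (Walk.length_takeUntil_lt_length hv hvy)
        ⟨x, v, p.takeUntil v hv⟩ ⟨hpath.takeUntil hv, hx, hvY⟩ rfl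
      exact ⟨q, hq, hsub.trans (p.support_takeUntil_subset_support hv), hends⟩
    push Not at hX hY
    exact ⟨⟨x, y, p⟩, ⟨hpath, hx, hy⟩, subset_rfl, hX, hY⟩

lemma nonempty_neighborSet_inter_support {x y v : V} {p : G.Walk x y} (hxy : x ≠ y)
    (hv : v ∈ p.support) : (G.neighborSet v ∩ {w | w ∈ p.support}).Nonempty := by
  obtain ⟨i, rfl, hi⟩ := Walk.mem_support_iff_exists_getVert.mp hv
  rcases hi.lt_or_eq with hi | rfl
  · exact ⟨_, p.adj_getVert_succ hi, p.getVert_mem_support _⟩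
  · have hlen : p.length ≠ 0 := fun h => hxy (Walk.eq_of_length_eq_zero h)
    have hadj := p.adj_getVert_succ (Nat.sub_one_lt hlen)
    rw [Nat.sub_one_add_one hlen] at hadj
    exact ⟨_, hadj.symm, p.getVert_mem_support _⟩

lemma nontrivial_neighborSet_inter_support {x y v : V} {p : G.Walk x y} (hp : p.IsPath)
    (hv : v ∈ p.support) (hvx : v ≠ x) (hvy : v ≠ y) :
    (G.neighborSet v ∩ {w | w ∈ p.support}).Nontrivial := by
  obtain ⟨i, rfl, hi⟩ := Walk.mem_support_iff_exists_getVert.mp hv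
  obtain ⟨i, rfl⟩ := Nat.exists_eq_add_one_of_ne_zero
    (show i ≠ 0 by rintro rfl; exact hvx p.getVert_zero)
  have hlt : i + 1 < p.length :=
    hi.lt_of_ne fun h => hvy (by rw [h, p.getVert_length])
  refine ⟨_, ⟨(p.adj_getVert_succ (Nat.lt_of_succ_lt hlt)).symm, p.getVert_mem_support _⟩,
    _, ⟨p.adj_getVert_succ hlt, p.getVert_mem_support _⟩, fun h => ?_⟩
  have := hp.getVert_injOn (show i ≤ p.length by lia) (show i + 1 + 1 ≤ p.length by lia) h
  lia

lemma exists_isThread_subset_pkgSupport (hXY : Disjoint X Y) {p : PathPkg G}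
    (hp : IsXYPath G X Y p) : ∃ S ⊆ pkgSupport p, IsThread G X Y S := by
  obtain ⟨⟨x, y, q⟩, ⟨hq, hx, hy⟩, hsub, hX, hY⟩ := exists_isXYPath_meeting_only_in_ends p hp
  refine ⟨_, hsub, ⟨x, ⟨q.start_mem_support, hx⟩, fun v hv => hX v hv.1 hv.2⟩,
    ⟨y, ⟨q.end_mem_support, hy⟩, fun v hv => hY v hv.1 hv.2⟩, fun v hv => ?_,
    fun v hv hvX hvY => ?_⟩
  · exact nonempty_neighborSet_inter_support (hXY.ne_of_mem hx hy) hv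
  · exact nontrivial_neighborSet_inter_support hq hv (fun h => hvX (h ▸ hx))
      (fun h => hvY (h ▸ hy))

namespace IsThread

lemma symm (hS : IsThread G X Y S) : IsThread G Y X S where
  existsUnique_source := hS.existsUnique_target
  existsUnique_target := hS.existsUnique_source
  nonempty_neighbors := hS.nonempty_neighbors
  nontrivial_neighbors v hv hY hX := hS.nontrivial_neighbors v hv hX hY

lemma preimage {W : Type*} {H : SimpleGraph W} (hS : IsThread G X Y S) (f : H ≃g G) :
    IsThread H (f ⁻¹' X) (f ⁻¹' Y) (f ⁻¹' S) := by
  have hneighbors (v : W) :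
      H.neighborSet v ∩ f ⁻¹' S = f ⁻¹' (G.neighborSet (f v) ∩ S) := by
    ext w
    simp only [Set.mem_inter_iff, mem_neighborSet, Set.mem_preimage, f.map_adj_iff]
  refine ⟨?_, ?_, fun v hv => ?_, fun v hv hX hY => ?_⟩
  · exact (f.bijective.existsUnique_iff (p := fun x => x ∈ S ∧ x ∈ X)).mp hS.existsUnique_source
  · exact (f.bijective.existsUnique_iff (p := fun x => x ∈ S ∧ x ∈ Y)).mp hS.existsUnique_target
  · rw [hneighbors]
    exact (hS.nonempty_neighbors _ hv).preimage f.surjective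
  · rw [hneighbors]
    exact (hS.nontrivial_neighbors _ hv hX hY).preimage f.surjective

lemma source_unique (hS : IsThread G X Y S) {x x' : V} (hx : x ∈ S) (hxX : x ∈ X)
    (hx'X : x' ∈ X) (hne : x ≠ x') : x' ∉ S :=
  fun hx' => hne (hS.existsUnique_source.unique ⟨hx, hxX⟩ ⟨hx', hx'X⟩)

lemma mem_of_neighborSet_subset_pair (hS : IsThread G X Y S) {v a b : V} (hv : v ∈ S) (ha : a ∉ S)
    (hN : G.neighborSet v ⊆ {a, b}) : b ∈ S := by
  obtain ⟨w, hw, hwS⟩ := hS.nonempty_neighbors v hv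
  rcases hN hw with rfl | rfl
  · exact absurd hwS ha
  · exact hwS

lemma mem_of_subsingleton_neighborSet_diff (hS : IsThread G X Y S) {v a b : V} (hv : v ∈ S)
    (hX : v ∉ X) (hY : v ∉ Y) (ha : a ∉ S) (hN : (G.neighborSet v \ {a, b}).Subsingleton) :
    b ∈ S := by
  by_contra hb
  refine (hS.nontrivial_neighbors v hv hX hY).not_subsingleton
    (hN.anti fun w ⟨hw, hwS⟩ => ⟨hw, ?_⟩)
  rintro (rfl | rfl)
  exacts [ha hwS, hb hwS]

end IsThread

end Thread

/-! ### The web -/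

namespace Web

/-- The `j`-th vertex of the first of the four strands of the `web`. -/
abbrev A (j : Fin 8) : Fin 4 × Fin 8 := (0, j)

/-- The `j`-th vertex of the second strand of the `web`. -/
abbrev B (j : Fin 8) : Fin 4 × Fin 8 := (1, j)

/-- The `j`-th vertex of the third strand of the `web`. -/
abbrev C (j : Fin 8) : Fin 4 × Fin 8 := (2, j)

/-- The `j`-th vertex of the fourth strand of the `web`. -/
abbrev D (j : Fin 8) : Fin 4 × Fin 8 := (3, j)

/-- The partner of a vertex in the perfect matching that joins the strands of the `web`. -/
def mate (v : Fin 4 × Fin 8) : Fin 4 × Fin 8 :=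
  ![![B 0, D 1, C 1, B 2, D 4, C 4, B 5, C 7],
    ![A 0, D 2, A 3, C 3, D 5, A 6, C 6, D 7],
    ![D 0, A 2, D 3, B 3, A 5, D 6, B 6, A 7],
    ![C 0, A 1, B 1, C 2, A 4, B 4, C 5, B 7]] v.1 v.2

/-- The graph consisting of four disjoint paths on eight vertices and the matching `mate`. -/
def web : SimpleGraph (Fin 4 × Fin 8) :=
  .fromRel fun v w => (v.1 = w.1 ∧ (v.2 : ℕ) + 1 = w.2) ∨ w = mate v

instance : DecidableRel web.Adj :=
  inferInstanceAs (DecidableRel (SimpleGraph.fromRel _).Adj)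

/-- The set `X` of first vertices of the strands. -/
def sources : Set (Fin 4 × Fin 8) := {v | v.2 = 0}

/-- The set `Y` of last vertices of the strands. -/
def targets : Set (Fin 4 × Fin 8) := {v | v.2 = 7}

lemma disjoint_sources_targets : Disjoint sources targets :=
  Set.disjoint_left.mpr fun _ h0 h7 => absurd (h0.symm.trans h7) (by decide)

/-- The strand `i` of the `web`, as a path from its first to its last vertex. -/
def strand (i : Fin 4) : PathPkg web :=
  ⟨_, _, Walk.ofSupport ((List.finRange 8).map (Prod.mk i)) (by simp)
    (by revert i; decide +kernel)⟩

lemma support_strand (i : Fin 4) :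
    (strand i).2.2.support = (List.finRange 8).map (Prod.mk i) :=
  Walk.support_ofSupport _ _

lemma mem_pkgSupport_strand {i : Fin 4} {v : Fin 4 × Fin 8} :
    v ∈ pkgSupport (strand i) ↔ v.1 = i := by
  simp [pkgSupport, support_strand, Prod.ext_iff, eq_comm]

lemma isXYPath_strand (i : Fin 4) : IsXYPath web sources targets (strand i) := by
  refine ⟨?_, rfl, rfl⟩
  rw [Walk.isPath_def, support_strand]
  exact (List.nodup_finRange 8).map (Prod.mk_right_injective i)

lemma eq_mate_or_mem_pkgEdges_strand {v w : Fin 4 × Fin 8} (hvw : web.Adj v w) :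
    w = mate v ∨ s(v, w) ∈ pkgEdges (strand v.1) := by
  have : ∀ v w, web.Adj v w → w = mate v ∨ s(v, w) ∈ (strand v.1).2.2.edges := by decide +kernel
  exact this v w hvw

/-- The automorphism of order four that reverses the strands and permutes them cyclically as
`A → B → D → C → A`. -/
def rotation : web ≃g web where
  toEquiv := .prodCongr c[0, 1, 3, 2] Fin.revPerm
  map_rel_iff' := by
    intro v w
    revert v w
    decide +kernel

lemma preimage_rotation_sources : rotation ⁻¹' sources = targets := by
  have : ∀ v, (rotation v).2 = 0 ↔ v.2 = 7 := by decide +kernel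
  exact Set.ext this

lemma preimage_rotation_targets : rotation ⁻¹' targets = sources := by
  have : ∀ v, (rotation v).2 = 7 ↔ v.2 = 0 := by decide +kernel
  exact Set.ext this

/-! ### Threads in the web -/

/-- A thread in the `web` from the first to the last vertices of the strands. -/
abbrev IsWebThread (S : Set (Fin 4 × Fin 8)) : Prop := IsThread web sources targets S

/-- Two threads in the `web` that are disjoint and not joined by an edge. -/
structure IsWebThreadPair (P Q : Set (Fin 4 × Fin 8)) : Prop where
  left : IsWebThread P
  right : IsWebThread Q
  anticomplete : webᶜ.IsCompleteBetween P Q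

/-- How the left half of the `web` is traversed by a pair of threads, the first of which is the one
on the side of strand `B`. -/
def IsLeftPattern (P Q : Set (Fin 4 × Fin 8)) : Prop :=
  B 2 ∈ P ∧ C 2 ∈ Q ∧ ((A 4 ∈ P ∧ C 3 ∈ Q) ∨ (B 3 ∈ P ∧ D 4 ∈ Q))

section WebThread

variable {P Q S : Set (Fin 4 × Fin 8)} {v w a b : Fin 4 × Fin 8}

-- The square of `rotation` exchanges `A` with `D` and `B` with `C`, fixing positions.
lemma IsLeftPattern.of_preimage_rotation_twice
    (h : IsLeftPattern (rotation ⁻¹' (rotation ⁻¹' Q)) (rotation ⁻¹' (rotation ⁻¹' P))) :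
    IsLeftPattern P Q := by
  obtain ⟨hC2, hB2, ⟨hD4, hB3⟩ | ⟨hC3, hA4⟩⟩ := h
  · exact ⟨hB2, hC2, .inr ⟨hB3, hD4⟩⟩
  · exact ⟨hB2, hC2, .inl ⟨hA4, hC3⟩⟩

namespace IsWebThread

lemma source_mem (hS : IsWebThread S) : A 0 ∈ S ∨ B 0 ∈ S ∨ C 0 ∈ S ∨ D 0 ∈ S := by
  obtain ⟨⟨i, j⟩, ⟨hv, rfl : j = 0⟩, -⟩ := hS.existsUnique_source
  fin_cases i
  exacts [.inl hv, .inr (.inl hv), .inr (.inr (.inl hv)), .inr (.inr (.inr hv))]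

lemma mem_of_notMem (hS : IsWebThread S) (hv : v ∈ S) (ha : a ∉ S)
    (hva : web.Adj v a := by decide) (hvb : web.Adj v b := by decide) (hab : a ≠ b := by decide) :
    b ∈ S := by
  have degree_end : ∀ v, v.2 = 0 ∨ v.2 = 7 → ∀ a, web.Adj v a → ∀ b, web.Adj v b → a ≠ b →
      ∀ w, web.Adj v w → w = a ∨ w = b := by decide +kernel
  have degree_le_three : ∀ v a, web.Adj v a → ∀ b, web.Adj v b → a ≠ b →
      ∀ w, web.Adj v w ∧ ¬ (w = a ∨ w = b) → ∀ w', web.Adj v w' ∧ ¬ (w' = a ∨ w' = b) →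
        w = w' := by decide +kernel
  by_cases hend : v.2 = 0 ∨ v.2 = 7
  · exact hS.mem_of_neighborSet_subset_pair hv ha (degree_end v hend a hva b hvb hab)
  · exact hS.mem_of_subsingleton_neighborSet_diff hv (fun h => hend (.inl h))
      (fun h => hend (.inr h)) ha (degree_le_three v a hva b hvb hab)

lemma B_one_mem (hS : IsWebThread S) (hB0 : B 0 ∈ S) : B 1 ∈ S :=
  hS.mem_of_notMem hB0 (hS.source_unique hB0 rfl rfl (by decide) : A 0 ∉ S)

lemma C_one_mem (hS : IsWebThread S) (hC0 : C 0 ∈ S) : C 1 ∈ S :=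
  hS.mem_of_notMem hC0 (hS.source_unique hC0 rfl rfl (by decide) : D 0 ∉ S)

lemma preimage_rotation (hS : IsWebThread S) : IsWebThread (rotation ⁻¹' S) := by
  simpa only [preimage_rotation_sources, preimage_rotation_targets]
    using (hS.preimage rotation).symm

end IsWebThread

namespace IsWebThreadPair

lemma symm (h : IsWebThreadPair P Q) : IsWebThreadPair Q P :=
  ⟨h.right, h.left, h.anticomplete.symm⟩

lemma preimage_rotation (h : IsWebThreadPair P Q) :
    IsWebThreadPair (rotation ⁻¹' P) (rotation ⁻¹' Q) where
  left := h.left.preimage_rotation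
  right := h.right.preimage_rotation
  anticomplete _ hv _ hw := by
    obtain ⟨hne, hadj⟩ := h.anticomplete hv hw
    exact ⟨fun hvw => hne (congrArg rotation hvw), fun hvw => hadj (rotation.map_adj_iff.mpr hvw)⟩

lemma symm_preimage_rotation_twice (h : IsWebThreadPair P Q) :
    IsWebThreadPair (rotation ⁻¹' (rotation ⁻¹' Q)) (rotation ⁻¹' (rotation ⁻¹' P)) :=
  h.symm.preimage_rotation.preimage_rotation

lemma notMem_right (h : IsWebThreadPair P Q) (hv : v ∈ P) : v ∉ Q :=
  fun hvQ => (h.anticomplete hv hvQ).1 rfl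

lemma notMem_right_of_adj (h : IsWebThreadPair P Q) (hv : v ∈ P)
    (hvw : web.Adj v w := by decide) : w ∉ Q :=
  fun hw => (h.anticomplete hv hw).2 hvw

lemma notMem_left_of_adj (h : IsWebThreadPair P Q) (hv : v ∈ Q)
    (hvw : web.Adj v w := by decide) : w ∉ P :=
  h.symm.notMem_right_of_adj hv hvw

lemma isLeftPattern_of_A_zero_mem (h : IsWebThreadPair P Q) (hA0 : A 0 ∈ P) :
    IsLeftPattern P Q := by
  have hB0 : B 0 ∉ P := h.left.source_unique hA0 rfl rfl (by decide)
  have hD0 : D 0 ∉ P := h.left.source_unique hA0 rfl rfl (by decide)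
  have hA1 : A 1 ∈ P := h.left.mem_of_notMem hA0 hB0
  have hC0 : C 0 ∈ Q := by
    rcases h.right.source_mem with hA0' | hB0' | hC0 | hD0'
    · exact absurd hA0' (h.notMem_right hA0)
    · exact absurd hB0' (h.notMem_right_of_adj hA0)
    · exact hC0
    · have hC0 : C 0 ∉ Q := h.right.source_unique hD0' rfl rfl (by decide)
      exact absurd (h.right.mem_of_notMem hD0' hC0) (h.notMem_right_of_adj hA1 (w := D 1))
  have hC1 : C 1 ∈ Q := h.right.C_one_mem hC0
  have hA2 : A 2 ∉ P := h.notMem_left_of_adj hC1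
  have hD1 : D 1 ∈ P := h.left.mem_of_notMem hA1 hA2
  have hD2 : D 2 ∈ P := h.left.mem_of_notMem hD1 hD0
  have hC2 : C 2 ∈ Q := h.right.mem_of_notMem hC1 (h.notMem_right_of_adj hA1 (w := A 2))
  have hB1 : B 1 ∈ P := h.left.mem_of_notMem hD2 (h.notMem_left_of_adj hC2 (w := D 3))
  have hB2 : B 2 ∈ P := h.left.mem_of_notMem hB1 hB0
  have hC3 : C 3 ∈ Q := h.right.mem_of_notMem hC2 (h.notMem_right_of_adj hD2 (w := D 3))
  have hA3 : A 3 ∈ P := h.left.mem_of_notMem hB2 (h.notMem_left_of_adj hC3 (w := B 3))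
  have hA4 : A 4 ∈ P := h.left.mem_of_notMem hA3 hA2
  exact ⟨hB2, hC2, .inl ⟨hA4, hC3⟩⟩

lemma isLeftPattern_of_D_zero_mem (h : IsWebThreadPair P Q) (hD0 : D 0 ∈ Q) :
    IsLeftPattern P Q :=
  .of_preimage_rotation_twice (h.symm_preimage_rotation_twice.isLeftPattern_of_A_zero_mem hD0)

lemma A_one_notMem_right (h : IsWebThreadPair P Q) (hB0 : B 0 ∈ P) (hC0 : C 0 ∈ Q) :
    A 1 ∉ Q := by
  intro hA1
  have hD0 : D 0 ∉ Q := h.right.source_unique hC0 rfl rfl (by decide)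
  have hD1 : D 1 ∈ Q := h.right.mem_of_notMem hA1 (h.notMem_right_of_adj hB0 (w := A 0))
  have hD2 : D 2 ∈ Q := h.right.mem_of_notMem hD1 hD0
  exact absurd (h.left.B_one_mem hB0) (h.notMem_left_of_adj hD2)

lemma D_two_notMem_left (h : IsWebThreadPair P Q) (hB0 : B 0 ∈ P) (hC0 : C 0 ∈ Q) :
    D 2 ∉ P := by
  intro hD2
  have hD1 : D 1 ∉ P := h.symm_preimage_rotation_twice.A_one_notMem_right hC0 hB0
  have hD3 : D 3 ∈ P := h.left.mem_of_notMem hD2 hD1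
  have hC2 : C 2 ∉ Q := h.notMem_right_of_adj hD3
  have hA2 : A 2 ∈ Q := h.right.mem_of_notMem (h.right.C_one_mem hC0) hC2
  have hA3 : A 3 ∈ Q := h.right.mem_of_notMem hA2 (h.A_one_notMem_right hB0 hC0)
  have hC2' : C 2 ∉ P := h.notMem_left_of_adj (h.right.C_one_mem hC0)
  have hD4 : D 4 ∈ P := h.left.mem_of_notMem hD3 hC2'
  have hB2 : B 2 ∉ Q := h.notMem_right_of_adj (h.left.B_one_mem hB0)
  have hA4 : A 4 ∈ Q := h.right.mem_of_notMem hA3 hB2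
  exact absurd hA4 (h.notMem_right_of_adj hD4)

lemma B_two_mem (h : IsWebThreadPair P Q) (hB0 : B 0 ∈ P) (hC0 : C 0 ∈ Q) : B 2 ∈ P :=
  h.left.mem_of_notMem (h.left.B_one_mem hB0) (h.D_two_notMem_left hB0 hC0)

lemma isLeftPattern_of_B_zero_mem_of_C_zero_mem (h : IsWebThreadPair P Q) (hB0 : B 0 ∈ P)
    (hC0 : C 0 ∈ Q) : IsLeftPattern P Q := by
  have hB2 : B 2 ∈ P := h.B_two_mem hB0 hC0
  have hC2 : C 2 ∈ Q := h.symm_preimage_rotation_twice.B_two_mem hC0 hB0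
  have hA2 : A 2 ∉ P := h.notMem_left_of_adj (h.right.C_one_mem hC0)
  have hD2 : D 2 ∉ Q := h.notMem_right_of_adj (h.left.B_one_mem hB0)
  refine ⟨hB2, hC2, ?_⟩
  by_cases hB3 : B 3 ∈ P
  · have hC3 : C 3 ∉ Q := h.notMem_right_of_adj hB3
    have hD3 : D 3 ∈ Q := h.right.mem_of_notMem hC2 hC3
    exact .inr ⟨hB3, h.right.mem_of_notMem hD3 hD2⟩
  · have hA3 : A 3 ∈ P := h.left.mem_of_notMem hB2 hB3
    have hA4 : A 4 ∈ P := h.left.mem_of_notMem hA3 hA2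
    have hD4 : D 4 ∉ Q := h.notMem_right_of_adj hA4
    have hD3 : D 3 ∉ Q := fun hD3 => hD4 (h.right.mem_of_notMem hD3 hD2)
    exact .inl ⟨hA4, h.right.mem_of_notMem hC2 hD3⟩

lemma isLeftPattern_or_isLeftPattern_symm (h : IsWebThreadPair P Q) :
    IsLeftPattern P Q ∨ IsLeftPattern Q P := by
  rcases h.left.source_mem with hA0 | hB0 | hC0 | hD0
  · exact .inl (h.isLeftPattern_of_A_zero_mem hA0)
  · rcases h.right.source_mem with hA0' | hB0' | hC0' | hD0'
    · exact .inr (h.symm.isLeftPattern_of_A_zero_mem hA0')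
    · exact absurd hB0' (h.notMem_right hB0)
    · exact .inl (h.isLeftPattern_of_B_zero_mem_of_C_zero_mem hB0 hC0')
    · exact .inl (h.isLeftPattern_of_D_zero_mem hD0')
  · rcases h.right.source_mem with hA0' | hB0' | hC0' | hD0'
    · exact .inr (h.symm.isLeftPattern_of_A_zero_mem hA0')
    · exact .inr (h.symm.isLeftPattern_of_B_zero_mem_of_C_zero_mem hB0' hC0)
    · exact absurd hC0' (h.notMem_right hC0)
    · exact .inl (h.isLeftPattern_of_D_zero_mem hD0')
  · exact .inr (h.symm.isLeftPattern_of_D_zero_mem hD0)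

lemma not_isLeftPattern (h : IsWebThreadPair P Q) : ¬ IsLeftPattern P Q := by
  rintro ⟨hB2, hC2, hmiddle⟩
  -- `rotation` sends `B 2`, `C 2`, `A 4`, `D 4` to `D 5`, `A 5`, `B 3`, `C 3`.
  rcases h.preimage_rotation.isLeftPattern_or_isLeftPattern_symm with
    ⟨hD5, hA5, -⟩ | ⟨-, -, ⟨hB3, -⟩ | ⟨-, hC3⟩⟩
  · rcases hmiddle with ⟨hA4, -⟩ | ⟨-, hD4⟩
    · exact absurd hA5 (h.notMem_right_of_adj hA4)
    · exact absurd hD5 (h.notMem_left_of_adj hD4)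
  · exact absurd hB3 (h.notMem_right_of_adj hB2)
  · exact absurd hC3 (h.notMem_left_of_adj hC2)

end IsWebThreadPair

lemma not_isWebThreadPair : ¬ IsWebThreadPair P Q := fun h =>
  h.isLeftPattern_or_isLeftPattern_symm.elim h.not_isLeftPattern h.symm.not_isLeftPattern

end WebThread

lemma not_pkgNonAdj {p q : PathPkg web} (hp : IsXYPath web sources targets p)
    (hq : IsXYPath web sources targets q) : ¬ PkgNonAdj web p q := by
  intro hpq
  obtain ⟨P, hPp, hP⟩ := exists_isThread_subset_pkgSupport disjoint_sources_targets hp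
  obtain ⟨Q, hQq, hQ⟩ := exists_isThread_subset_pkgSupport disjoint_sources_targets hq
  exact not_isWebThreadPair ⟨hP, hQ, fun v hv w hw => hpq v (hPp hv) w (hQq hw)⟩

end Web

/-! ### Disjoint copies -/

/-- The image of a packaged walk under a graph homomorphism. -/
def pkgMap {W : Type*} {G : SimpleGraph V} {H : SimpleGraph W} (f : G →g H) (p : PathPkg G) :
    PathPkg H :=
  ⟨f p.1, f p.2.1, p.2.2.map f⟩

/-- A family of disjoint `X`-`Y`-paths such that every vertex on one of them is incident to at most
one edge of `G` outside the paths. -/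
structure IsSparseLinkage (G : SimpleGraph V) (X Y : Set V) {ι : Type*} (P : ι → PathPkg G) :
    Prop where
  isXYPath : ∀ i, IsXYPath G X Y (P i)
  pairwise_disjoint : Pairwise fun i j => PkgDisjoint (P i) (P j)
  subsingleton_edges : ∀ v ∈ ⋃ i, pkgSupport (P i),
    {e | e ∈ G.edgeSet ∧ v ∈ e ∧ e ∉ ⋃ i, pkgEdges (P i)}.Subsingleton

section Copies

variable {W : Type*} {G : SimpleGraph V} {H : SimpleGraph W} {X Y : Set V} {ι κ : Type*}
  {P : ι → PathPkg G}

lemma pkgSupport_pkgMap (f : G →g H) (p : PathPkg G) :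
    pkgSupport (pkgMap f p) = f '' pkgSupport p := by
  ext v
  simp [pkgSupport, pkgMap]

lemma pkgEdges_pkgMap (f : G →g H) (p : PathPkg G) :
    pkgEdges (pkgMap f p) = Sym2.map f '' pkgEdges p := by
  ext e
  simp [pkgEdges, pkgMap]

lemma IsSparseLinkage.comp_equiv {ι' : Type*} (hP : IsSparseLinkage G X Y P) (e : ι' ≃ ι) :
    IsSparseLinkage G X Y (P ∘ e) where
  isXYPath i := hP.isXYPath (e i)
  pairwise_disjoint := hP.pairwise_disjoint.comp_of_injective e.injective
  subsingleton_edges := by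
    simpa only [Function.comp_apply, e.surjective.iUnion_comp fun i => pkgSupport (P i),
      e.surjective.iUnion_comp fun i => pkgEdges (P i)] using hP.subsingleton_edges

lemma IsSparseLinkage.copies (hP : IsSparseLinkage G X Y P) (κ : Type*) :
    IsSparseLinkage ((⊥ : SimpleGraph κ) □ G) (Prod.snd ⁻¹' X) (Prod.snd ⁻¹' Y)
      fun i : ι × κ => pkgMap (boxProdRight ⊥ G i.2).toHom (P i.1) where
  isXYPath := fun ⟨i, c⟩ =>
    ⟨(hP.isXYPath i).1.map (boxProdRight ⊥ G c).injective, (hP.isXYPath i).2⟩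
  pairwise_disjoint := by
    rintro ⟨i, c⟩ ⟨j, d⟩ hne v hi hj
    rw [pkgSupport_pkgMap] at hi hj
    obtain ⟨x, hx, rfl⟩ := hi
    obtain ⟨y, hy, hxy⟩ := hj
    obtain ⟨rfl, rfl⟩ : d = c ∧ y = x := Prod.ext_iff.mp hxy
    exact hP.pairwise_disjoint (fun hij => hne (congrArg (·, d) hij)) y hx hy
  subsingleton_edges := by
    rintro ⟨c, x⟩ hx
    simp only [pkgSupport_pkgMap, pkgEdges_pkgMap, Set.mem_iUnion] at hx ⊢
    obtain ⟨⟨i, d⟩, x', hx', hcx⟩ := hx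
    obtain ⟨rfl, rfl⟩ : d = c ∧ x' = x := Prod.ext_iff.mp hcx
    refine ((hP.subsingleton_edges x' (Set.mem_iUnion_of_mem i hx')).image
      (Sym2.map (boxProdRight ⊥ G d))).anti ?_
    rintro e ⟨he, hxe, hmem⟩
    obtain ⟨⟨d', y⟩, rfl⟩ := Sym2.mem_iff_exists.mp hxe
    obtain ⟨hadj, rfl⟩ : G.Adj x' y ∧ d = d' := by simpa [boxProd_adj] using he
    refine ⟨s(x', y), ⟨hadj, Sym2.mem_mk_left x' y, fun h => hmem ?_⟩, rfl⟩
    obtain ⟨j, hj⟩ := Set.mem_iUnion.mp h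
    exact ⟨(j, d), s(x', y), hj, rfl⟩

lemma fst_eq_of_mem_support_bot_boxProd {x y v : κ × V} {p : ((⊥ : SimpleGraph κ) □ G).Walk x y}
    (hv : v ∈ p.support) : v.1 = x.1 := by
  induction p with
  | nil => rw [Walk.mem_support_nil_iff.mp hv]
  | cons hadj p ih =>
    rcases List.mem_cons.mp hv with rfl | hv
    · rfl
    · obtain ⟨-, hfst⟩ : _ ∧ _ := by simpa [boxProd_adj] using hadj
      exact (ih hv).trans hfst.symm

lemma exists_isXYPath_of_bot_boxProd {p : PathPkg ((⊥ : SimpleGraph κ) □ G)}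
    (hp : IsXYPath _ (Prod.snd ⁻¹' X) (Prod.snd ⁻¹' Y) p) :
    ∃ q, IsXYPath G X Y q ∧ ∀ v ∈ pkgSupport q, (p.1.1, v) ∈ pkgSupport p := by
  classical
  obtain ⟨x, y, p⟩ := p
  obtain ⟨-, hx, hy⟩ := hp
  let snd : ((⊥ : SimpleGraph κ) □ G) →g G := ⟨Prod.snd, fun hadj => by
    simp only [boxProd_adj, bot_adj, false_and, false_or] at hadj
    exact hadj.1⟩
  refine ⟨⟨x.2, y.2, (p.map snd).bypass⟩, ⟨Walk.bypass_isPath _, hx, hy⟩, fun v hv => ?_⟩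
  have hv' : v ∈ (p.map snd).support := Walk.support_bypass_subset_support _ hv
  rw [Walk.support_map] at hv'
  obtain ⟨w, hw, rfl⟩ := List.mem_map.mp hv'
  exact (Prod.ext (fst_eq_of_mem_support_bot_boxProd hw).symm rfl : (x.1, w.2) = w) ▸ hw

lemma exists_pkgNonAdj_of_bot_boxProd [Fintype ι] [Fintype κ]
    (hcard : Fintype.card κ < Fintype.card ι) {Q : ι → PathPkg ((⊥ : SimpleGraph κ) □ G)}
    (hQ : ∀ i, IsXYPath _ (Prod.snd ⁻¹' X) (Prod.snd ⁻¹' Y) (Q i))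
    (hnonadj : Pairwise fun i j => PkgNonAdj _ (Q i) (Q j)) :
    ∃ p q, IsXYPath G X Y p ∧ IsXYPath G X Y q ∧ PkgNonAdj G p q := by
  obtain ⟨i, j, hij, hcopy⟩ := Fintype.exists_ne_map_eq_of_card_lt (fun i => (Q i).1.1) hcard
  obtain ⟨p, hp, hpi⟩ := exists_isXYPath_of_bot_boxProd (hQ i)
  obtain ⟨q, hq, hqj⟩ := exists_isXYPath_of_bot_boxProd (hQ j)
  refine ⟨p, q, hp, hq, fun v hv w hw => ?_⟩
  obtain ⟨hne, hadj⟩ := hnonadj hij _ (hpi v hv) _ (hqj w hw)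
  refine ⟨fun hvw => hne (Prod.ext hcopy hvw), fun hvw => hadj ?_⟩
  exact boxProd_adj.mpr (.inr ⟨hvw, hcopy⟩)

end Copies

lemma Web.isSparseLinkage_strand : IsSparseLinkage web sources targets strand where
  isXYPath := isXYPath_strand
  pairwise_disjoint i j hij v hi hj :=
    hij ((mem_pkgSupport_strand.mp hi).symm.trans (mem_pkgSupport_strand.mp hj))
  subsingleton_edges v _ := by
    refine Set.subsingleton_of_forall_eq s(v, mate v) ?_
    rintro e ⟨he, hve, hmem⟩
    obtain ⟨w, rfl⟩ := Sym2.mem_iff_exists.mp hve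
    rcases eq_mate_or_mem_pkgEdges_strand (web.mem_edgeSet.mp he) with rfl | hstrand
    · rfl
    · exact absurd (Set.mem_iUnion.mpr ⟨v.1, hstrand⟩) hmem

theorem statement_10 (k : ℕ) (hk : 2 ≤ k) :
    ∃ (W : Type) (G : SimpleGraph W) (X Y : Set W) (P : Fin (4 * (k - 1)) → PathPkg G),
      (∀ i, IsXYPath G X Y (P i)) ∧
      (Pairwise fun i j => PkgDisjoint (P i) (P j)) ∧
      (∀ v, v ∈ (⋃ i, pkgSupport (P i)) →
        Set.Subsingleton
          {e : Sym2 W | e ∈ G.edgeSet ∧ v ∈ e ∧ e ∉ ⋃ i, pkgEdges (P i)}) ∧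
      ¬ ∃ Q : Fin k → PathPkg G,
          (∀ i, IsXYPath G X Y (Q i)) ∧
          Pairwise fun i j => PkgNonAdj G (Q i) (Q j) := by
  have hcopies := Web.isSparseLinkage_strand.copies (Fin (k - 1))
  obtain ⟨isXYPath, pairwise_disjoint, subsingleton_edges⟩ :=
    hcopies.comp_equiv finProdFinEquiv.symm
  refine ⟨_, _, _, _, _, isXYPath, pairwise_disjoint, subsingleton_edges, ?_⟩
  rintro ⟨Q, hQ, hnonadj⟩
  have hcard : Fintype.card (Fin (k - 1)) < Fintype.card (Fin k) := by
    simp only [Fintype.card_fin]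
    lia
  obtain ⟨p, q, hp, hq, hpq⟩ := exists_pkgNonAdj_of_bot_boxProd hcard hQ hnonadj
  exact Web.not_pkgNonAdj hp hq hpq
end

section
/- For every natural number r there exists a constant c = c(r) > 0 such that the following holds: if G is a simple graph that does not contain the complete graph K_r as a topological minor, X, Y ⊆ V(G), and k is a natural number, then either (1) G contains k pairwise non-adjacent X-Y-paths, or (2) there exists a set of fewer than c·k vertices of G that separates X and Y. -/
open SimpleGraph

universe u

variable {V : Type u}

/-!
Menger's theorem yields either a small separator or many disjoint `X`-`Y`-paths, which may be taken
to be induced. It remains to thin out such a family until no edge runs between two of its members,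
losing only a constant factor.

In a graph without a topological `K_r` the vertices of disjoint paths induce a degenerate graph, and
at most half of the paths contain a vertex that sees many of the other paths. For an independent set
of vertices, contract stars centred at these vertices inside the union of the remaining paths. A
separator of the contracted graph meets each of these paths, and each of its vertices can account
for boundedly many of them, so Menger's theorem provides a constant fraction of them as a new
linkage; lifted to `G`, it absorbs the contracted neighbours of each centre into the path through
that centre. Doing this for each colour class and each out-edge of an acyclic orientation of bounded
outdegree bounds all degrees. Doing it afterwards for each colour class of a colouring of the square
leaves every vertex without neighbours outside its own path.
-/

/-! ### Linked sets -/

section Linked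

variable {G H : SimpleGraph V} {A B X X' Y Y' S Z : Set V} {u v w : V}

/-- `A` contains the vertices of some `X`-`Y`-walk. Stating linkage results through vertex sets
rather than through the walks themselves avoids all dependent-type bookkeeping. -/
def LinkedIn (G : SimpleGraph V) (A X Y : Set V) : Prop :=
  ∃ x ∈ X, ∃ y ∈ Y, ∃ p : G.Walk x y, ∀ w ∈ p.support, w ∈ A

theorem LinkedIn.mono (h : LinkedIn G A X Y) (hG : G ≤ H) (hA : A ⊆ B) (hX : X ⊆ X')
    (hY : Y ⊆ Y') : LinkedIn H B X' Y' := by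
  obtain ⟨x, hx, y, hy, p, hp⟩ := h
  exact ⟨x, hX hx, y, hY hy, p.mapLe hG,
    fun w hw => hA (hp w (by rwa [Walk.support_mapLe_eq_support] at hw))⟩

theorem LinkedIn.mono_set (h : LinkedIn G A X Y) (hA : A ⊆ B) : LinkedIn G B X Y :=
  h.mono le_rfl hA le_rfl le_rfl

theorem LinkedIn.symm (h : LinkedIn G A X Y) : LinkedIn G A Y X := by
  obtain ⟨x, hx, y, hy, p, hp⟩ := h
  exact ⟨y, hy, x, hx, p.reverse, fun w hw => hp w (by simpa using hw)⟩

theorem linkedIn_of_mem (hA : w ∈ A) (hX : w ∈ X) (hY : w ∈ Y) : LinkedIn G A X Y :=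
  ⟨w, hX, w, hY, Walk.nil, by simpa using hA⟩

theorem linkedIn_singleton : LinkedIn G {w} {w} {w} :=
  linkedIn_of_mem rfl rfl rfl

theorem LinkedIn.trans (h : LinkedIn G A X {w}) (h' : LinkedIn G B {w} Y) :
    LinkedIn G (A ∪ B) X Y := by
  obtain ⟨x, hx, _, rfl, p, hp⟩ := h
  obtain ⟨_, rfl, y, hy, q, hq⟩ := h'
  exact ⟨x, hx, y, hy, p.append q,
    fun w hw => ((Walk.mem_support_append_iff _ _).1 hw).imp (hp w) (hq w)⟩

theorem LinkedIn.trans_adj (h : LinkedIn G A X {u}) (huv : G.Adj u v) (h' : LinkedIn G B {v} Y) :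
    LinkedIn G (A ∪ B) X Y := by
  obtain ⟨x, hx, _, rfl, p, hp⟩ := h
  obtain ⟨_, rfl, y, hy, q, hq⟩ := h'
  refine ⟨x, hx, y, hy, p.append (q.cons huv), fun w hw => ?_⟩
  rw [Walk.mem_support_append_iff, Walk.support_cons, List.mem_cons] at hw
  rcases hw with hw | rfl | hw
  exacts [.inl (hp w hw), .inl (hp w p.end_mem_support), .inr (hq w hw)]

theorem LinkedIn.to_separator (h : LinkedIn G A X Y) (hS : ¬ LinkedIn G Sᶜ X Y) :
    LinkedIn G A X S := by
  classical
  obtain ⟨x, hx, y, hy, p, hp⟩ := h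
  obtain ⟨s, hsp, hs⟩ : ∃ s ∈ p.support, s ∈ S := by
    by_contra! hno
    exact hS ⟨x, hx, y, hy, p, hno⟩
  exact ⟨x, hx, s, hs, p.takeUntil s hsp,
    fun w hw => hp w (Walk.support_takeUntil_subset_support _ _ hw)⟩

theorem not_linkedIn_compl_right : ¬ LinkedIn G Yᶜ X Y :=
  fun ⟨_, _, y, hy, p, hp⟩ => hp y p.end_mem_support hy

theorem xySeparates_of_not_linkedIn (h : ¬ LinkedIn G Zᶜ X Y) : XYSeparates G X Y Z := by
  rintro ⟨x, y, p⟩ ⟨-, hx, hy⟩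
  by_contra! hZ
  exact h ⟨x, hx, y, hy, p, fun w hw hwZ => hZ w hwZ hw⟩

/-- `k` pairwise disjoint vertex sets, each containing an `X`-`Y`-walk. -/
def HasLinkage (G : SimpleGraph V) (X Y : Set V) (k : ℕ) : Prop :=
  ∃ A : Fin k → Set V, (∀ i, LinkedIn G (A i) X Y) ∧ Pairwise fun i j => Disjoint (A i) (A j)

theorem HasLinkage.mono {k : ℕ} (h : HasLinkage G X Y k) (hG : G ≤ H) : HasLinkage H X Y k := by
  obtain ⟨A, hA, hdisj⟩ := h
  exact ⟨A, fun i => (hA i).mono hG le_rfl le_rfl le_rfl, hdisj⟩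

theorem hasLinkage_card {ι : Type*} {T : Finset ι} {C : ι → Set V}
    (hC : ∀ t ∈ T, LinkedIn G (C t) X Y) (hdisj : (T : Set ι).PairwiseDisjoint C) :
    HasLinkage G X Y T.card := by
  let e := T.equivFin.symm
  exact ⟨fun i => C (e i), fun i => hC _ (e i).2, fun i j hij =>
    hdisj (e i).2 (e j).2 fun h => hij (e.injective (Subtype.ext h))⟩

end Linked

/-! ### Menger's theorem -/

section Menger

variable {G : SimpleGraph V} {A X Y S Z : Set V} {T T' : Finset V} {B C : V → Set V} {u v : V}
  {k : ℕ}

theorem LinkedIn.deleteEdges (h : LinkedIn G A X Y) (u v : V) :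
    LinkedIn (G.deleteEdges {s(u, v)}) A X Y ∨
      (LinkedIn (G.deleteEdges {s(u, v)}) A X {u} ∧ LinkedIn (G.deleteEdges {s(u, v)}) A {v} Y) ∨
      LinkedIn (G.deleteEdges {s(u, v)}) A X {v} ∧ LinkedIn (G.deleteEdges {s(u, v)}) A {u} Y := by
  obtain ⟨x, hx, y, hy, p, hp⟩ := h
  induction p generalizing X with
  | nil => exact .inl (linkedIn_of_mem (hp _ (by simp)) hx hy)
  | @cons x c y hxc p ih =>
    have hxA : x ∈ A := hp x (by simp)
    have ih' := ih (X := {c}) rfl hy fun w hw => hp w (by simp [hw])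
    by_cases he : s(x, c) = s(u, v)
    · rcases Sym2.eq_iff.1 he with ⟨rfl, rfl⟩ | ⟨rfl, rfl⟩
      · rcases ih' with hcY | ⟨-, hcY⟩ | ⟨-, hxY⟩
        · exact .inr (.inl ⟨linkedIn_of_mem hxA hx rfl, hcY⟩)
        · exact .inr (.inl ⟨linkedIn_of_mem hxA hx rfl, hcY⟩)
        · exact .inl (hxY.mono le_rfl le_rfl (by simpa using hx) le_rfl)
      · rcases ih' with hcY | ⟨-, hxY⟩ | ⟨-, hcY⟩
        · exact .inr (.inr ⟨linkedIn_of_mem hxA hx rfl, hcY⟩)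
        · exact .inl (hxY.mono le_rfl le_rfl (by simpa using hx) le_rfl)
        · exact .inr (.inr ⟨linkedIn_of_mem hxA hx rfl, hcY⟩)
    · have hadj : (G.deleteEdges {s(u, v)}).Adj x c := deleteEdges_adj.2 ⟨hxc, by simpa using he⟩
      have extend {Y' : Set V} (h : LinkedIn (G.deleteEdges {s(u, v)}) A {c} Y') :
          LinkedIn (G.deleteEdges {s(u, v)}) A X Y' :=
        ((linkedIn_of_mem hxA hx (Set.mem_singleton x)).trans_adj hadj h).mono_set
          (Set.union_self A).le
      exact ih'.imp extend (Or.imp (And.imp_left extend) (And.imp_left extend))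

theorem not_linkedIn_of_deleteEdges (hS : ¬ LinkedIn (G.deleteEdges {s(u, v)}) Sᶜ X Y)
    (hv : LinkedIn (G.deleteEdges {s(u, v)}) Sᶜ {v} Y)
    (hZ : ¬ LinkedIn (G.deleteEdges {s(u, v)}) Zᶜ X (insert u S)) : ¬ LinkedIn G Zᶜ X Y := by
  have hZS : ¬ LinkedIn (G.deleteEdges {s(u, v)}) Zᶜ X S :=
    fun h => hZ (h.mono le_rfl le_rfl le_rfl (Set.subset_insert u S))
  intro hXY
  rcases hXY.deleteEdges u v with h | ⟨h, -⟩ | ⟨h, -⟩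
  · exact hZS (h.to_separator hS)
  · exact hZ (h.mono le_rfl le_rfl le_rfl (by simp))
  · refine hZS (h.to_separator fun hXv => hS ?_)
    exact (hXv.trans hv).mono_set (Set.union_self _).le

/-- One half of a linkage: disjoint sets `B t`, one for each `t ∈ T`, each carrying a path from `X`
to `t`; every other vertex of the set is reached by an initial segment, which avoids `t`. -/
structure IsFan (G : SimpleGraph V) (X : Set V) (T : Finset V) (B : V → Set V) : Prop where
  mem : ∀ t ∈ T, t ∈ B t
  linked : ∀ t ∈ T, ∀ w ∈ B t, LinkedIn G (insert w (B t \ {t})) X {w}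
  disjoint : (T : Set V).PairwiseDisjoint B

theorem IsFan.eq_of_mem (h : IsFan G X T B) {s t : V} (hs : s ∈ T) (ht : t ∈ T) (hst : s ∈ B t) :
    s = t :=
  h.disjoint.elim_set hs ht s (h.mem s hs) hst

theorem IsFan.linked_self (h : IsFan G X T B) {t : V} (ht : t ∈ T) : LinkedIn G (B t) X {t} :=
  (h.linked t ht t (h.mem t ht)).mono_set (by simp [h.mem t ht])

theorem exists_pathSet_of_linkedIn {t : V} (h : LinkedIn G A X {t}) :
    ∃ P ⊆ A, t ∈ P ∧ ∀ w ∈ P, LinkedIn G (insert w (P \ {t})) X {w} := by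
  classical
  obtain ⟨x, hx, _, rfl, p, hp⟩ := h
  refine ⟨{w | w ∈ p.bypass.support}, fun w hw => hp w (Walk.support_bypass_subset_support _ hw),
    p.bypass.end_mem_support, fun w hw => ⟨x, hx, w, rfl, p.bypass.takeUntil w hw, fun z hz => ?_⟩⟩
  by_cases hzw : z = w
  · exact .inl hzw
  · refine .inr ⟨Walk.support_takeUntil_subset_support _ _ hz, ?_⟩
    rintro rfl
    exact Walk.endpoint_notMem_support_takeUntil p.bypass_isPath hw hzw hz

theorem HasLinkage.exists_isFan (h : HasLinkage G X T k) (hT : T.card ≤ k) :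
    ∃ B, IsFan G X T B := by
  obtain ⟨A, hA, hdisj⟩ := h
  have hA' : ∀ i, ∃ t ∈ T, LinkedIn G (A i) X {t} :=
    fun i => let ⟨x, hx, t, ht, p, hp⟩ := hA i; ⟨t, ht, x, hx, t, rfl, p, hp⟩
  choose f hfT hf using hA'
  choose P hPA hfP hP using fun i => exists_pathSet_of_linkedIn (hf i)
  have hinj : Function.Injective f := fun i j hij => by
    by_contra hne
    exact Set.disjoint_left.1 (hdisj hne) (hPA i (hfP i)) (hij ▸ hPA j (hfP j))
  refine ⟨fun t => {w | ∃ i, f i = t ∧ w ∈ P i}, fun t ht => ?_, ?_, ?_⟩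
  · obtain ⟨i, -, hi⟩ := Finset.surj_on_of_inj_on_of_card_le (s := Finset.univ) (fun i _ => f i)
      (fun i _ => hfT i) (fun i j _ _ hij => hinj hij) (by simpa using hT) t ht
    exact ⟨i, hi.symm, hi ▸ hfP i⟩
  · rintro _ - w ⟨i, rfl, hw⟩
    exact (hP i w hw).mono_set (Set.insert_subset_insert fun z hz => ⟨⟨i, rfl, hz.1⟩, hz.2⟩)
  · rintro t - t' - hne
    refine Set.disjoint_left.2 ?_
    rintro w ⟨i, rfl, hwi⟩ ⟨j, rfl, hwj⟩
    exact Set.disjoint_left.1 (hdisj fun hij => hne (congrArg f hij)) (hPA i hwi) (hPA j hwj)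

theorem IsFan.mem_inter (hB : IsFan G X T B) (hC : IsFan G Y T' C) (hS : ¬ LinkedIn G Sᶜ X Y)
    (hST : S ⊆ T) (hST' : S ⊆ T') {s t w : V} (ht : t ∈ T) (hs : s ∈ T') (hwB : w ∈ B t)
    (hwC : w ∈ C s) : w ∈ S ∧ w = t ∧ w = s := by
  suffices hw : w ∈ S from ⟨hw, hB.eq_of_mem (hST hw) ht hwB, hC.eq_of_mem (hST' hw) hs hwC⟩
  by_contra hw
  refine hS (((hB.linked t ht w hwB).trans (hC.linked s hs w hwC).symm).mono_set ?_)
  rintro z ((rfl | ⟨hzB, hzt⟩) | (rfl | ⟨hzC, hzs⟩)) hzS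
  exacts [hw hzS, hzt (hB.eq_of_mem (hST hzS) ht hzB), hw hzS, hzs (hC.eq_of_mem (hST' hzS) hs hzC)]

theorem pairwise_update {κ α : Type*} [DecidableEq κ] {r : α → α → Prop}
    (hr : ∀ x y, r x y → r y x) {s : Set κ} {F : κ → α} {b : κ} {x : α}
    (hF : (s \ {b}).Pairwise fun c c' => r (F c) (F c')) (hx : ∀ c ∈ s, c ≠ b → r x (F c)) :
    s.Pairwise fun c c' => r (Function.update F b x c) (Function.update F b x c') := by
  intro c hc c' hc' hne
  rcases eq_or_ne c b with rfl | hcb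
  · rw [Function.update_self, Function.update_of_ne hne.symm]
    exact hx c' hc' hne.symm
  rcases eq_or_ne c' b with rfl | hcb'
  · rw [Function.update_self, Function.update_of_ne hne]
    exact hr _ _ (hx c hc hne)
  · rw [Function.update_of_ne hcb, Function.update_of_ne hcb']
    exact hF ⟨hc, hcb⟩ ⟨hc', hcb'⟩ hne

theorem IsFan.pairwiseDisjoint_update [DecidableEq V] {S : Finset V} (hC : IsFan G Y (insert v S) C)
    (hv : v ∉ S) (u : V) :
    ((insert u S : Finset V) : Set V).PairwiseDisjoint (Function.update C u (C v)) := by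
  have hS : ∀ t ∈ (insert u S : Finset V), t ≠ u → t ∈ S := fun t ht htu =>
    Finset.mem_of_mem_insert_of_ne ht htu
  refine pairwise_update (r := Disjoint) (fun _ _ hd => hd.symm)
    (hC.disjoint.subset fun t ht => ?_) fun t ht htu => ?_
  · exact Finset.mem_insert_of_mem (hS t ht.1 ht.2)
  · exact hC.disjoint (by simp) (by simp [hS t ht htu]) (ne_of_mem_of_not_mem (hS t ht htu) hv).symm

theorem IsFan.hasLinkage_insert [DecidableEq V] {S : Finset V} (huv : G.Adj u v) (hu : u ∉ S)
    (hv : v ∉ S)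
    (hS : ¬ LinkedIn (G.deleteEdges {s(u, v)}) (S : Set V)ᶜ X Y)
    (hB : IsFan (G.deleteEdges {s(u, v)}) X (insert u S) B)
    (hC : IsFan (G.deleteEdges {s(u, v)}) Y (insert v S) C) :
    HasLinkage G X Y (insert u S).card := by
  have hle : G.deleteEdges {s(u, v)} ≤ G := deleteEdges_le _
  have cross {s t w : V} (ht : t ∈ insert u S) (hs : s ∈ insert v S) (hwB : w ∈ B t)
      (hwC : w ∈ C s) : w ∈ S ∧ w = t ∧ w = s :=
    hB.mem_inter hC hS (by simp) (by simp) ht hs hwB hwC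
  refine hasLinkage_card (C := fun t => B t ∪ Function.update C u (C v) t) (fun t ht => ?_) ?_
  · have hX := (hB.linked_self ht).mono hle le_rfl le_rfl le_rfl
    rcases Finset.mem_insert.1 ht with rfl | htS
    · have hY := (hC.linked_self (Finset.mem_insert_self v S)).mono hle le_rfl le_rfl le_rfl
      simpa using hX.trans_adj huv hY.symm
    · have hY := (hC.linked_self (Finset.mem_insert_of_mem htS)).mono hle le_rfl le_rfl le_rfl
      have htu : t ≠ u := ne_of_mem_of_not_mem htS hu
      simpa [htu] using hX.trans hY.symm
  · have hBC {s t w : V} (hs : s ∈ insert u S) (ht : t ∈ insert u S) (hst : s ≠ t) (hwB : w ∈ B s) :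
        w ∉ Function.update C u (C v) t := by
      intro hwC
      rcases Finset.mem_insert.1 ht with rfl | htS
      · obtain ⟨hwS, -, rfl⟩ := cross hs (Finset.mem_insert_self v S) hwB (by simpa using hwC)
        exact hv hwS
      · rw [Function.update_of_ne (ne_of_mem_of_not_mem htS hu)] at hwC
        obtain ⟨-, rfl, rfl⟩ := cross hs (Finset.mem_insert_of_mem htS) hwB hwC
        exact hst rfl
    have hCC := hC.pairwiseDisjoint_update hv u
    intro s hs t ht hst
    refine Set.disjoint_left.2 ?_
    rintro w (hws | hws) (hwt | hwt)
    exacts [Set.disjoint_left.1 (hB.disjoint hs ht hst) hws hwt, hBC hs ht hst hws hwt,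
      hBC ht hs hst.symm hwt hws, Set.disjoint_left.1 (hCC hs ht hst) hws hwt]

theorem hasLinkage_of_edgeSet_eq_empty (hG : G.edgeSet = ∅)
    (hk : ∀ Z : Finset V, ¬ LinkedIn G (Z : Set V)ᶜ X Y → k ≤ Z.card) : HasLinkage G X Y k := by
  obtain ⟨T, hT, rfl⟩ : ∃ T : Finset V, (T : Set V) ⊆ X ∩ Y ∧ T.card = k := by
    by_cases hfin : (X ∩ Y).Finite
    · have hcard : k ≤ hfin.toFinset.card := by
        refine hk _ ?_
        rintro ⟨x, hx, y, hy, p, hp⟩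
        cases p with
        | nil => exact hp x (by simp) (by simp [hx, hy])
        | cons h _ => exact Set.notMem_empty _ (hG ▸ (mem_edgeSet G).2 h)
      obtain ⟨T, hT, hTk⟩ := Finset.exists_subset_card_eq hcard
      exact ⟨T, fun x hx => by simpa using hT hx, hTk⟩
    · exact Set.Infinite.exists_subset_card_eq hfin k
  exact hasLinkage_card (C := fun t => {t})
    (fun t ht => linkedIn_of_mem rfl (hT ht).1 (hT ht).2) fun s _ t _ hst => by simpa using hst

/-- If deleting an edge `uv` admits a separator `S` smaller than `k`, then both `insert u S` and
`insert v S` are separators of size `k` of `G`, and Menger's theorem for the smaller graph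
provides a fan onto each of them. -/
theorem hasLinkage_of_deleteEdges {S : Finset V} (huv : G.Adj u v)
    (ih : ∀ X' Y' : Set V, (∀ Z : Finset V,
      ¬ LinkedIn (G.deleteEdges {s(u, v)}) (Z : Set V)ᶜ X' Y' → k ≤ Z.card) →
        HasLinkage (G.deleteEdges {s(u, v)}) X' Y' k)
    (hk : ∀ Z : Finset V, ¬ LinkedIn G (Z : Set V)ᶜ X Y → k ≤ Z.card) (hSk : S.card < k)
    (hS : ¬ LinkedIn (G.deleteEdges {s(u, v)}) (S : Set V)ᶜ X Y)
    (hXu : LinkedIn (G.deleteEdges {s(u, v)}) (S : Set V)ᶜ X {u})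
    (hvY : LinkedIn (G.deleteEdges {s(u, v)}) (S : Set V)ᶜ {v} Y) : HasLinkage G X Y k := by
  classical
  have hu : u ∉ S := let ⟨_, _, _, hy, p, hp⟩ := hXu; hp u (hy ▸ p.end_mem_support)
  have hv : v ∉ S := let ⟨_, hx, _, _, p, hp⟩ := hvY; hp v (hx ▸ p.start_mem_support)
  have hswap : s(u, v) = s(v, u) := Sym2.eq_swap
  have sepX (Z : Finset V) (hZ : ¬ LinkedIn (G.deleteEdges {s(u, v)}) (Z : Set V)ᶜ X
      (insert u S : Finset V)) : k ≤ Z.card :=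
    hk Z (not_linkedIn_of_deleteEdges hS hvY (by rwa [Finset.coe_insert] at hZ))
  have sepY (Z : Finset V) (hZ : ¬ LinkedIn (G.deleteEdges {s(u, v)}) (Z : Set V)ᶜ Y
      (insert v S : Finset V)) : k ≤ Z.card := by
    rw [hswap, Finset.coe_insert] at hZ
    rw [hswap] at hS hXu
    exact hk Z fun h => not_linkedIn_of_deleteEdges (fun h => hS h.symm) hXu.symm hZ h.symm
  have hcard {w : V} : (insert w S).card ≤ k := (Finset.card_insert_le _ _).trans hSk
  obtain ⟨B, hB⟩ := (ih X _ sepX).exists_isFan hcard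
  obtain ⟨C, hC⟩ := (ih Y _ sepY).exists_isFan hcard
  have hk' : (insert u S).card = k := hcard.antisymm (sepX _ not_linkedIn_compl_right)
  exact hk' ▸ hB.hasLinkage_insert huv hu hv hS hC

theorem hasLinkage_of_finite_edgeSet (hG : G.edgeSet.Finite)
    (hk : ∀ Z : Finset V, ¬ LinkedIn G (Z : Set V)ᶜ X Y → k ≤ Z.card) : HasLinkage G X Y k := by
  induction hn : G.edgeSet.ncard using Nat.strong_induction_on generalizing G X Y with
  | _ n ih =>
  rcases G.edgeSet.eq_empty_or_nonempty with hempty | ⟨⟨u, v⟩, huv⟩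
  · exact hasLinkage_of_edgeSet_eq_empty hempty hk
  have hss : (G.deleteEdges {s(u, v)}).edgeSet ⊂ G.edgeSet := by
    rw [edgeSet_deleteEdges]
    exact ⟨Set.sdiff_subset, fun h => (h huv).2 rfl⟩
  have ih' (X' Y' : Set V) := ih _ (hn ▸ Set.ncard_lt_ncard hss hG) (X := X') (Y := Y')
    (hG.subset hss.subset)
  by_cases hk' : ∀ Z : Finset V, ¬ LinkedIn (G.deleteEdges {s(u, v)}) (Z : Set V)ᶜ X Y → k ≤ Z.card
  · exact (ih' X Y hk' rfl).mono (deleteEdges_le _)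
  push Not at hk'
  obtain ⟨S, hS, hSk⟩ := hk'
  have hXY : LinkedIn G (S : Set V)ᶜ X Y := by
    by_contra h
    exact (hk S h).not_gt hSk
  rcases hXY.deleteEdges u v with h | ⟨hXu, hvY⟩ | ⟨hXv, huY⟩
  · exact absurd h hS
  · exact hasLinkage_of_deleteEdges huv (fun X' Y' h => ih' X' Y' h rfl) hk hSk hS hXu hvY
  · rw [Sym2.eq_swap] at ih' hS hXv huY
    exact hasLinkage_of_deleteEdges (G.adj_symm huv) (fun X' Y' h => ih' X' Y' h rfl) hk hSk hS
      hXv huY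

theorem exists_finset_of_forall_finset {ι : Type*} [Preorder ι] [IsDirectedOrder ι] [Nonempty ι]
    (Z : ι → Finset V) (hZ : ∀ i, (Z i).card < k) :
    ∃ W : Finset V, W.card < k ∧ ∀ (S : Finset V) (i₀ : ι),
      (∀ i ≥ i₀, ∃ z ∈ S, z ∈ Z i) → ∃ z ∈ S, z ∈ W := by
  let U : Ultrafilter ι := Ultrafilter.of Filter.atTop
  let W : Set V := {w | ∀ᶠ i in (U : Filter ι), w ∈ Z i}
  have hcard (T : Finset V) (hT : (T : Set V) ⊆ W) : T.card < k := by
    obtain ⟨i, hi⟩ := ((Filter.eventually_all_finset T).2 fun t ht => hT ht).exists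
    exact (Finset.card_le_card hi).trans_lt (hZ i)
  have hW : W.Finite := by
    by_contra hinf
    obtain ⟨T, hT, hTk⟩ := Set.Infinite.exists_subset_card_eq hinf k
    exact (hcard T hT).ne hTk
  refine ⟨hW.toFinset, hcard _ (by simp), fun S i₀ hS => ?_⟩
  have hev : ∀ᶠ i in (U : Filter ι), i ∈ ⋃ z ∈ (S : Set V), {i | z ∈ Z i} := by
    filter_upwards [Ultrafilter.of_le _ (Filter.eventually_ge_atTop i₀)] with i hi
    simpa using hS i hi
  obtain ⟨z, hzS, hzW⟩ := (Ultrafilter.finite_biUnion_mem_iff S.finite_toSet).1 hev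
  exact ⟨z, hzS, hW.mem_toFinset.2 hzW⟩

theorem menger (G : SimpleGraph V) (X Y : Set V) (k : ℕ) :
    HasLinkage G X Y k ∨ ∃ Z : Finset V, Z.card < k ∧ ¬ LinkedIn G (Z : Set V)ᶜ X Y := by
  classical
  refine or_iff_not_imp_left.2 fun hlink => ?_
  have hsep (E : Finset (Sym2 V)) : ∃ Z : Finset V, Z.card < k ∧
      ¬ LinkedIn (G ⊓ fromEdgeSet E) (Z : Set V)ᶜ X Y := by
    by_contra! hno
    have hfin : (G ⊓ fromEdgeSet (E : Set (Sym2 V))).edgeSet.Finite := by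
      refine E.finite_toSet.subset ?_
      rw [edgeSet_inf, edgeSet_fromEdgeSet]
      exact Set.inter_subset_right.trans Set.sdiff_subset
    refine hlink ((hasLinkage_of_finite_edgeSet hfin fun Z hZ => ?_).mono inf_le_left)
    by_contra! hZk
    exact hZ (hno Z hZk)
  choose Z hZk hZ using hsep
  obtain ⟨W, hWk, hW⟩ := exists_finset_of_forall_finset Z hZk
  refine ⟨W, hWk, ?_⟩
  rintro ⟨x, hx, y, hy, p, hp⟩
  obtain ⟨z, hzp, hzW⟩ := hW p.support.toFinset p.edges.toFinset fun E hE => by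
    by_contra! hno
    have hpE : ∀ e ∈ p.edges, e ∈ (G ⊓ fromEdgeSet (E : Set (Sym2 V))).edgeSet := fun e he => by
      have heG := p.edges_subset_edgeSet he
      simpa [heG, G.not_isDiag_of_mem_edgeSet heG] using hE (List.mem_toFinset.2 he)
    refine hZ E ⟨x, hx, y, hy, p.transfer _ hpE, fun w hw hwZ => hno w ?_ hwZ⟩
    rwa [Walk.support_transfer, ← List.mem_toFinset] at hw
  exact hp z (List.mem_toFinset.1 hzp) hzW

end Menger

/-! ### Topological cliques from vertices attached to few connected sets -/

section Mader

variable {G : SimpleGraph V} {κ : Type*} {A A' : Finset V} {B B' : Finset κ} {C : κ → Set V}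
  {N N' : V → Finset κ} {r ρ K : ℕ} {F : Finset (Fin r × Fin r)} {R S : Set V}
  {f : Fin r → V} {P : Fin r × Fin r → Set V}

theorem linkedIn_of_preconnected (hS : (G.induce S).Preconnected) {u v : V} (hu : u ∈ S)
    (hv : v ∈ S) : LinkedIn G S {u} {v} := by
  obtain ⟨p⟩ := hS ⟨u, hu⟩ ⟨v, hv⟩
  refine ⟨u, rfl, v, rfl, p.map (Embedding.induce S).toHom, fun w hw => ?_⟩
  obtain ⟨⟨z, hz⟩, -, rfl⟩ := List.mem_map.1 (p.support_map _ ▸ hw)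
  exact hz

/-- The part of a topological `K_r` spanned by the pairs in `F`: branch vertices `f i ∈ A`, and for
every `q ∈ F` a set `P q ⊆ R` carrying the path that joins the two branch vertices of `q`. -/
structure IsPartialTopClique (G : SimpleGraph V) (F : Finset (Fin r × Fin r)) (A : Finset V)
    (R : Set V) (f : Fin r → V) (P : Fin r × Fin r → Set V) : Prop where
  injective : Function.Injective f
  branch_mem : ∀ i, f i ∈ A
  linked : ∀ q ∈ F, LinkedIn G (P q) {f q.1} {f q.2}
  subset : ∀ q ∈ F, P q ⊆ R
  eq_of_branch_mem : ∀ q ∈ F, ∀ l, f l ∈ P q → l = q.1 ∨ l = q.2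
  inter_subset : (F : Set (Fin r × Fin r)).Pairwise fun q q' => P q ∩ P q' ⊆ Set.range f

theorem IsPartialTopClique.mono (h : IsPartialTopClique G F A R f P) (hA : A ⊆ A') (hR : R ⊆ S) :
    IsPartialTopClique G F A' S f P :=
  { h with
    branch_mem := fun i => hA (h.branch_mem i)
    subset := fun q hq => (h.subset q hq).trans hR }

theorem IsPartialTopClique.insert (h : IsPartialTopClique G F A R f P) (q : Fin r × Fin r)
    (hS : (G.induce S).Preconnected) (hadj : ∀ a ∈ A, ∃ u ∈ S, G.Adj a u) (hAR : (A : Set V) ⊆ R)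
    (hRS : Disjoint R S) :
    IsPartialTopClique G (insert q F) A (R ∪ S) f
      (Function.update P q ({f q.1, f q.2} ∪ S)) where
  injective := h.injective
  branch_mem := h.branch_mem
  linked q' hq' := by
    rcases eq_or_ne q' q with rfl | hne
    · obtain ⟨u, hu, hfu⟩ := hadj _ (h.branch_mem q'.1)
      obtain ⟨v, hv, hfv⟩ := hadj _ (h.branch_mem q'.2)
      have hS' := (linkedIn_singleton.trans_adj hfu
        (linkedIn_of_preconnected hS hu hv)).trans_adj hfv.symm linkedIn_singleton
      rw [Function.update_self]
      refine hS'.mono_set ?_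
      rintro x ((rfl | hx) | rfl)
      exacts [.inl (.inl rfl), .inr hx, .inl (.inr rfl)]
    · rw [Function.update_of_ne hne]
      exact h.linked q' (Finset.mem_of_mem_insert_of_ne hq' hne)
  subset q' hq' := by
    rcases eq_or_ne q' q with rfl | hne
    · rw [Function.update_self]
      refine Set.union_subset_union_left S (Set.pair_subset ?_ ?_)
      exacts [hAR (h.branch_mem _), hAR (h.branch_mem _)]
    · rw [Function.update_of_ne hne]
      exact (h.subset q' (Finset.mem_of_mem_insert_of_ne hq' hne)).trans Set.subset_union_left
  eq_of_branch_mem q' hq' l hl := by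
    rcases eq_or_ne q' q with rfl | hne
    · rw [Function.update_self] at hl
      rcases hl with (hl | hl) | hl
      · exact .inl (h.injective hl)
      · exact .inr (h.injective hl)
      · exact absurd hl (Set.disjoint_left.1 hRS (hAR (h.branch_mem l)))
    · rw [Function.update_of_ne hne] at hl
      exact h.eq_of_branch_mem q' (Finset.mem_of_mem_insert_of_ne hq' hne) l hl
  inter_subset := by
    have key {q' : Fin r × Fin r} (hq' : q' ∈ F) : ({f q.1, f q.2} ∪ S) ∩ P q' ⊆ Set.range f := by
      rintro x ⟨(rfl | rfl) | hxS, hxP⟩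
      exacts [⟨_, rfl⟩, ⟨_, rfl⟩, absurd hxS (Set.disjoint_left.1 hRS (h.subset q' hq' hxP))]
    exact pairwise_update (r := fun P P' : Set V => P ∩ P' ⊆ Set.range f)
      (fun _ _ hPP' => by rwa [Set.inter_comm])
      (h.inter_subset.mono fun q' hq' => Finset.mem_of_mem_insert_of_ne hq'.1 hq'.2)
      fun q' hq' hne => key (Finset.mem_of_mem_insert_of_ne hq' hne)

theorem IsPartialTopClique.hasTopKMinor (h : IsPartialTopClique G Finset.univ A R f P) :
    HasTopKMinor G r := by
  classical
  have hwalk (q : Fin r × Fin r) : ∃ p : G.Walk (f q.1) (f q.2), ∀ w ∈ p.support, w ∈ P q := by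
    obtain ⟨_, rfl, _, rfl, p, hp⟩ := h.linked q (Finset.mem_univ q)
    exact ⟨p, hp⟩
  choose p hp using hwalk
  have hmem {q : Fin r × Fin r} {x : V} (hx : x ∈ (p q).bypass.support) : x ∈ P q :=
    hp q x (Walk.support_bypass_subset_support _ hx)
  have hend {q : Fin r × Fin r} {l : Fin r} (hl : f l ∈ P q) : f l = f q.1 ∨ f l = f q.2 :=
    (h.eq_of_branch_mem q (Finset.mem_univ q) l hl).imp (congrArg f) (congrArg f)
  refine ⟨f, fun i j _ => (p (i, j)).bypass, h.injective, fun i j _ => Walk.bypass_isPath _, ?_, ?_⟩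
  · rintro i j _ x hx hxi hxj l rfl
    exact (hend (hmem hx)).elim hxi hxj
  · intro i j _ i' j' _ hne x hx hx'
    obtain ⟨l, rfl⟩ := h.inter_subset (Finset.mem_coe.2 (Finset.mem_univ (i, j)))
      (Finset.mem_coe.2 (Finset.mem_univ (i', j'))) hne ⟨hmem hx, hmem hx'⟩
    exact ⟨hend (hmem hx), hend (hmem hx')⟩

/-- The vertices `a ∈ A` are attached to pairwise disjoint connected sets `C b`, `b ∈ B`, none of
which meets `A`: each `a` has a neighbour in `C b` for all `b` in its list `N a ⊆ B`. The lists
need not contain all such `b`. -/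
structure IsAttachment (G : SimpleGraph V) (A : Finset V) (C : κ → Set V) (B : Finset κ)
    (N : V → Finset κ) : Prop where
  preconnected : ∀ b ∈ B, (G.induce (C b)).Preconnected
  disjoint : (B : Set κ).PairwiseDisjoint C
  notMem : ∀ b ∈ B, ∀ a ∈ A, a ∉ C b
  subset : ∀ a ∈ A, N a ⊆ B
  adj : ∀ a ∈ A, ∀ b ∈ N a, ∃ u ∈ C b, G.Adj a u

theorem IsAttachment.mono (h : IsAttachment G A C B N) (hA : A' ⊆ A) (hB : B' ⊆ B)
    (hN : ∀ a ∈ A', N' a ⊆ N a) (hNB : ∀ a ∈ A', N' a ⊆ B') : IsAttachment G A' C B' N' where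
  preconnected b hb := h.preconnected b (hB hb)
  disjoint := h.disjoint.subset hB
  notMem b hb a ha := h.notMem b (hB hb) a (hA ha)
  subset := hNB
  adj a ha b hb := h.adj a (hA ha) b (hN a ha hb)

section Merge

variable {a : V} {b b' : κ}

theorem IsAttachment.preconnected_union (h : IsAttachment G A C B N) (ha : a ∈ A) (hb : b ∈ N a)
    (hb' : b' ∈ N a) : (G.induce (C b ∪ ({a} ∪ C b'))).Preconnected := by
  obtain ⟨u, hu, hau⟩ := h.adj a ha b hb
  obtain ⟨u', hu', hau'⟩ := h.adj a ha b' hb'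
  have hab' : (G.induce ({a} ∪ C b')).Connected :=
    connected_induce_union .of_subsingleton (h.preconnected b' (h.subset a ha hb'))
      (Set.mem_singleton a) hu' hau'
  exact (connected_induce_union (h.preconnected b (h.subset a ha hb)) hab'.preconnected hu
    (.inl rfl) hau.symm).preconnected

variable [DecidableEq V] [DecidableEq κ]

theorem IsAttachment.merge (h : IsAttachment G A C B N) (ha : a ∈ A) (hb : b ∈ N a)
    (hb' : b' ∈ N a) (hne : b ≠ b') :
    IsAttachment G (A.erase a) (Function.update C b (C b ∪ ({a} ∪ C b'))) (B.erase b')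
      (fun x => (N x).image (Function.update id b' b)) where
  preconnected c hc := by
    rcases eq_or_ne c b with rfl | hcb
    · rw [Function.update_self]
      exact h.preconnected_union ha hb hb'
    · rw [Function.update_of_ne hcb]
      exact h.preconnected c (Finset.mem_of_mem_erase hc)
  disjoint := by
    have key {c : κ} (hc : c ∈ B.erase b') (hcb : c ≠ b) :
        Disjoint (C b ∪ ({a} ∪ C b')) (C c) := by
      obtain ⟨hcb', hcB⟩ := Finset.mem_erase.1 hc
      simp only [Set.disjoint_union_left, Set.disjoint_singleton_left]
      exact ⟨h.disjoint (h.subset a ha hb) hcB hcb.symm, h.notMem c hcB a ha,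
        h.disjoint (h.subset a ha hb') hcB hcb'.symm⟩
    exact pairwise_update (r := Disjoint) (fun _ _ hd => hd.symm)
      (h.disjoint.subset fun c hc => Finset.mem_of_mem_erase hc.1) fun c hc => key hc
  notMem c hc x hx := by
    obtain ⟨hxa, hxA⟩ := Finset.mem_erase.1 hx
    rcases eq_or_ne c b with rfl | hcb
    · rw [Function.update_self]
      rintro (hx | hx | hx)
      exacts [h.notMem _ (h.subset a ha hb) x hxA hx, hxa hx,
        h.notMem _ (h.subset a ha hb') x hxA hx]
    · rw [Function.update_of_ne hcb]
      exact h.notMem c (Finset.mem_of_mem_erase hc) x hxA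
  subset x hx := by
    refine Finset.image_subset_iff.2 fun c hc => ?_
    rcases eq_or_ne c b' with rfl | hcb'
    · simpa [hne] using h.subset a ha hb
    · simpa [hcb'] using h.subset x (Finset.mem_of_mem_erase hx) hc
  adj x hx c' hc' := by
    obtain ⟨c, hc, rfl⟩ := Finset.mem_image.1 hc'
    obtain ⟨u, hu, hxu⟩ := h.adj x (Finset.mem_of_mem_erase hx) c hc
    refine ⟨u, ?_, hxu⟩
    rcases eq_or_ne c b' with rfl | hcb'
    · rw [Function.update_self, Function.update_self]
      exact .inr (.inr hu)
    rw [Function.update_of_ne hcb', id]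
    rcases eq_or_ne c b with rfl | hcb
    · rw [Function.update_self]
      exact .inl hu
    · rwa [Function.update_of_ne hcb]

theorem iUnion_update_subset (ha : a ∈ A) (hb : b ∈ B) (hb' : b' ∈ B) :
    ((A.erase a : Finset V) : Set V) ∪
        ⋃ c ∈ B.erase b', Function.update C b (C b ∪ ({a} ∪ C b')) c ⊆
      (A : Set V) ∪ ⋃ c ∈ B, C c := by
  refine Set.union_subset (fun x hx => .inl (Finset.mem_of_mem_erase hx))
    (Set.iUnion₂_subset fun c hc x hx => ?_)
  rcases eq_or_ne c b with rfl | hcb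
  · rw [Function.update_self] at hx
    rcases hx with hx | rfl | hx
    exacts [.inr (Set.mem_biUnion hb hx), .inl ha, .inr (Set.mem_biUnion hb' hx)]
  · rw [Function.update_of_ne hcb] at hx
    exact .inr (Set.mem_biUnion (Finset.mem_of_mem_erase hc) hx)

theorem card_image_update_add (T : Finset κ) (hne : b ≠ b') :
    (T.image (Function.update id b' b)).card + (if b ∈ T ∧ b' ∈ T then 1 else 0) = T.card := by
  by_cases hbT : b ∈ T ∧ b' ∈ T
  · have himage : T.image (Function.update id b' b) = T.erase b' := by
      ext c
      simp only [Finset.mem_image, Finset.mem_erase, Function.update_apply, id]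
      grind
    rw [himage, if_pos hbT, Finset.card_erase_add_one hbT.2]
  · rw [if_neg hbT, add_zero, Finset.card_image_of_injOn]
    intro c hc c' hc' hcc'
    simp only [Function.update_apply, id] at hcc'
    grind

end Merge

/-- `ρ` attachments for each vertex of `A`, and more than `K` times as many vertices as sets to
attach to, force a partial topological clique for the pairs in `F`. -/
def ForcesPartialTopClique (G : SimpleGraph V) (κ : Type*) (F : Finset (Fin r × Fin r))
    (ρ K : ℕ) : Prop :=
  ∀ (A : Finset V) (C : κ → Set V) (B : Finset κ) (N : V → Finset κ), IsAttachment G A C B N →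
    (∀ a ∈ A, ρ ≤ (N a).card) → K * B.card < A.card →
      ∃ f P, IsPartialTopClique G F A (↑A ∪ ⋃ b ∈ B, C b) f P

theorem forcesPartialTopClique_empty (G : SimpleGraph V) (κ : Type*) :
    ForcesPartialTopClique G κ (∅ : Finset (Fin r × Fin r)) (r + 1) 1 := by
  intro A C B N h hN hA
  have hr : r ≤ A.card := by
    obtain ⟨a, ha⟩ : A.Nonempty := Finset.card_pos.1 (by omega)
    have := (hN a ha).trans (Finset.card_le_card (h.subset a ha))
    omega
  obtain ⟨T, hTA, hT⟩ := Finset.exists_subset_card_eq hr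
  let e := (T.equivFinOfCardEq hT).symm
  exact ⟨fun i => e i, fun _ => ∅,
    { injective := fun i j hij => e.injective (Subtype.ext hij)
      branch_mem := fun i => hTA (e i).2
      linked := by simp
      subset := by simp
      eq_of_branch_mem := by simp
      inter_subset := by simp }⟩

section Core

variable [DecidableEq κ]

theorem ForcesPartialTopClique.exists_insert_of_star (hF : ForcesPartialTopClique G κ F ρ K)
    (q : Fin r × Fin r) (h : IsAttachment G A C B N) {b : κ} (hb : b ∈ B) (hA' : A' ⊆ A)
    (hbN : ∀ a ∈ A', b ∈ N a) (hρ : ∀ a ∈ A', ρ < (N a).card)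
    (hK : K * (A'.biUnion fun a => (N a).erase b).card < A'.card) :
    ∃ f P, IsPartialTopClique G (insert q F) A (↑A ∪ ⋃ b ∈ B, C b) f P := by
  set B' := A'.biUnion fun a => (N a).erase b with hB'
  have hB'B : B' ⊆ B :=
    Finset.biUnion_subset.2 fun a ha => (Finset.erase_subset _ _).trans (h.subset a (hA' ha))
  have hbB' : b ∉ B' := by simp [hB']
  have h' : IsAttachment G A' C B' fun a => (N a).erase b :=
    h.mono hA' hB'B (fun a _ => Finset.erase_subset _ _)
      fun a ha => Finset.subset_biUnion_of_mem (fun a => (N a).erase b) ha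
  obtain ⟨f, P, hfP⟩ := hF A' C B' _ h' (fun a ha => by
    rw [Finset.card_erase_of_mem (hbN a ha)]
    exact Nat.le_sub_one_of_lt (hρ a ha)) hK
  have hdisj : Disjoint ((A' : Set V) ∪ ⋃ c ∈ B', C c) (C b) := by
    refine Set.disjoint_union_left.2 ⟨Set.disjoint_left.2 fun a ha => h.notMem b hb a (hA' ha),
      Set.disjoint_iUnion₂_left.2 fun c hc => h.disjoint (hB'B hc) hb ?_⟩
    exact ne_of_mem_of_not_mem hc hbB'
  refine ⟨f, _, (hfP.insert q (h.preconnected b hb) (fun a ha => h.adj a (hA' ha) b (hbN a ha))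
    Set.subset_union_left hdisj).mono hA' ?_⟩
  refine Set.union_subset (Set.union_subset_union (by exact_mod_cast hA')
    (Set.biUnion_subset_biUnion_left hB'B)) ?_
  exact (Set.subset_biUnion_of_mem hb).trans Set.subset_union_right

theorem mul_card_biUnion_erase_lt (hρ : 1 ≤ ρ) {b : κ} (hA : A.Nonempty)
    (hdeg : ∀ a ∈ A, (N a).card ≤ (K + 3) * ρ)
    (hcodeg : ∀ a ∈ A, ∀ c ∈ N a, c ≠ b →
      (K + 1) * ((K + 2) * ρ) < (A.filter fun x => c ∈ N x).card) :
    K * (A.biUnion fun a => (N a).erase b).card < A.card := by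
  set B := A.biUnion fun a => (N a).erase b
  have hcount : B.card * ((K + 1) * ((K + 2) * ρ)) ≤ A.card * ((K + 3) * ρ) := by
    refine Finset.card_mul_le_card_mul (fun c a => c ∈ N a) (fun c hc => ?_) fun a ha => ?_
    · obtain ⟨a, ha, hca⟩ := Finset.mem_biUnion.1 hc
      exact (hcodeg a ha c (Finset.mem_of_mem_erase hca) (Finset.ne_of_mem_erase hca)).le
    · refine (Finset.card_le_card fun c hc => ?_).trans (hdeg a ha)
      exact (Finset.mem_filter.1 hc).2
  have hApos := hA.card_pos
  by_contra! hle
  have h1 : A.card * ((K + 3) * ρ) ≤ K * B.card * ((K + 3) * ρ) := Nat.mul_le_mul_right _ hle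
  have h2 : 0 < B.card := Nat.pos_of_ne_zero fun h => by
    rw [h, mul_zero] at hle
    omega
  nlinarith

variable [DecidableEq V]

theorem sum_card_merge {a : V} {b b' : κ} (ha : a ∈ A) (hb' : b' ∈ B) (hne : b ≠ b') {d D : ℕ}
    (hsum : d * A.card + D * B.card < ∑ x ∈ A, (N x).card)
    (hcodeg : (N a).card + ((A.erase a).filter fun x => b ∈ N x ∧ b' ∈ N x).card ≤ d + D) :
    d * (A.erase a).card + D * (B.erase b').card <
      ∑ x ∈ A.erase a, ((N x).image (Function.update id b' b)).card := by
  have hmerge : ∑ x ∈ A.erase a, ((N x).image (Function.update id b' b)).card +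
      ((A.erase a).filter fun x => b ∈ N x ∧ b' ∈ N x).card = ∑ x ∈ A.erase a, (N x).card := by
    rw [Finset.card_filter, ← Finset.sum_add_distrib]
    exact Finset.sum_congr rfl fun x _ => card_image_update_add (N x) hne
  have herase := Finset.add_sum_erase A (fun x => (N x).card) ha
  rw [← Finset.card_erase_add_one ha, ← Finset.card_erase_add_one hb', mul_add, mul_add] at hsum
  omega

theorem ForcesPartialTopClique.exists_insert_of_lt_codegree
    (hF : ForcesPartialTopClique G κ F ρ K) (q : Fin r × Fin r) (hρ : 1 ≤ ρ)
    (h : IsAttachment G A C B N) (hA : A.Nonempty) (hdeg : ∀ a ∈ A, (N a).card ≤ (K + 3) * ρ)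
    (hlow : ∀ a ∈ A, ρ < (N a).card)
    (hcodeg : ∀ a ∈ A, ∀ b ∈ N a, ∀ b' ∈ N a, b ≠ b' → ρ + (K + 2) * ((K + 2) * ρ) <
      (N a).card + ((A.erase a).filter fun x => b ∈ N x ∧ b' ∈ N x).card) :
    ∃ f P, IsPartialTopClique G (insert q F) A (↑A ∪ ⋃ b ∈ B, C b) f P := by
  obtain ⟨a, ha⟩ := hA
  obtain ⟨b, hb⟩ : (N a).Nonempty := Finset.card_pos.1 ((Nat.zero_le ρ).trans_lt (hlow a ha))
  have hsub : A.filter (fun x => b ∈ N x) ⊆ A := Finset.filter_subset _ A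
  have hbN : ∀ x ∈ A.filter (fun x => b ∈ N x), b ∈ N x := fun x hx => (Finset.mem_filter.1 hx).2
  refine hF.exists_insert_of_star q h (h.subset a ha hb) hsub hbN (fun x hx => hlow x (hsub hx))
    (mul_card_biUnion_erase_lt hρ ⟨a, Finset.mem_filter.2 ⟨ha, hb⟩⟩
      (fun x hx => hdeg x (hsub hx)) fun x hx c hc hcb => ?_)
  have hlt := hcodeg x (hsub hx) b (hbN x hx) c hc hcb.symm
  have hle : ((A.erase x).filter fun y => b ∈ N y ∧ c ∈ N y).card ≤
      ((A.filter fun y => b ∈ N y).filter fun y => c ∈ N y).card := by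
    rw [Finset.filter_filter]
    exact Finset.card_le_card (Finset.filter_subset_filter _ (Finset.erase_subset x A))
  have hx := hdeg x (hsub hx)
  nlinarith

end Core

/-- While some vertex has at most `ρ` attachments, delete it; while two sets attached to a common
vertex have few common attached vertices, merge them through that vertex. Both operations preserve
the lower bound on the number of attachments, and once neither applies, the vertices attached to
any fixed set `C b` satisfy the assumptions for `F`, leaving `C b` free to realise `q`. -/
theorem ForcesPartialTopClique.exists_insert_of_sum_card (hF : ForcesPartialTopClique G κ F ρ K)
    (q : Fin r × Fin r) (hρ : 1 ≤ ρ) (h : IsAttachment G A C B N)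
    (hdeg : ∀ a ∈ A, (N a).card ≤ (K + 3) * ρ)
    (hsum : ρ * A.card + (K + 2) * ((K + 2) * ρ) * B.card < ∑ a ∈ A, (N a).card) :
    ∃ f P, IsPartialTopClique G (insert q F) A (↑A ∪ ⋃ b ∈ B, C b) f P := by
  classical
  induction hn : A.card using Nat.strong_induction_on generalizing A C B N with
  | _ n ih =>
  subst hn
  by_cases hlow : ∃ a ∈ A, (N a).card ≤ ρ
  · obtain ⟨a, ha, haρ⟩ := hlow
    have hAa : A.erase a ⊆ A := Finset.erase_subset a A
    obtain ⟨f, P, hfP⟩ := ih _ (Finset.card_erase_lt_of_mem ha)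
      (h.mono hAa subset_rfl (fun _ _ => subset_rfl) fun x hx => h.subset x (hAa hx))
      (fun x hx => hdeg x (hAa hx)) (by
        have herase := Finset.add_sum_erase A (fun x => (N x).card) ha
        rw [← Finset.card_erase_add_one ha, mul_add] at hsum
        omega) rfl
    exact ⟨f, P, hfP.mono hAa (Set.union_subset_union_left _ (by exact_mod_cast hAa))⟩
  push Not at hlow
  by_cases hmerge : ∃ a ∈ A, ∃ b ∈ N a, ∃ b' ∈ N a, b ≠ b' ∧
      (N a).card + ((A.erase a).filter fun x => b ∈ N x ∧ b' ∈ N x).card ≤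
        ρ + (K + 2) * ((K + 2) * ρ)
  · obtain ⟨a, ha, b, hb, b', hb', hne, hcodeg⟩ := hmerge
    obtain ⟨f, P, hfP⟩ := ih _ (Finset.card_erase_lt_of_mem ha) (h.merge ha hb hb' hne)
      (fun x hx => Finset.card_image_le.trans (hdeg x (Finset.mem_of_mem_erase hx)))
      (sum_card_merge ha (h.subset a ha hb') hne hsum hcodeg) rfl
    exact ⟨f, P, hfP.mono (Finset.erase_subset a A)
      (iUnion_update_subset ha (h.subset a ha hb) (h.subset a ha hb'))⟩
  push Not at hmerge
  exact hF.exists_insert_of_lt_codegree q hρ h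
    (Finset.nonempty_iff_ne_empty.2 fun hA => by simp [hA] at hsum) hdeg hlow hmerge

theorem ForcesPartialTopClique.insert (hF : ForcesPartialTopClique G κ F ρ K)
    (q : Fin r × Fin r) (hρ : 1 ≤ ρ) :
    ForcesPartialTopClique G κ (insert q F) ((K + 3) * ρ) (K + 2) := by
  classical
  intro A C B N h hN hA
  choose! N' hN'N hN' using fun a ha => Finset.exists_subset_card_eq (hN a ha)
  refine hF.exists_insert_of_sum_card q hρ
    (h.mono subset_rfl subset_rfl hN'N fun a ha => (hN'N a ha).trans (h.subset a ha))
    (fun a ha => (hN' a ha).le) ?_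
  rw [Finset.sum_congr rfl hN', Finset.sum_const, smul_eq_mul]
  have hpos : 0 < (K + 2) * ρ := Nat.mul_pos (by omega) hρ
  nlinarith [Nat.mul_lt_mul_of_pos_left hA hpos]

/-- The number of attachments per vertex that forces a partial topological `K_r` with `n` pairs,
as long as there are more than `2 * n + 1` times as many vertices as sets. -/
def maderDegree (r : ℕ) : ℕ → ℕ
  | 0 => r + 1
  | n + 1 => (2 * n + 4) * maderDegree r n

theorem one_le_maderDegree (r n : ℕ) : 1 ≤ maderDegree r n := by
  induction n with
  | zero => exact Nat.le_add_left 1 r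
  | succ n ih => exact Nat.mul_pos (by omega) ih

theorem forcesPartialTopClique (G : SimpleGraph V) (κ : Type*) (F : Finset (Fin r × Fin r)) :
    ForcesPartialTopClique G κ F (maderDegree r F.card) (2 * F.card + 1) := by
  induction F using Finset.induction_on with
  | empty => exact forcesPartialTopClique_empty G κ
  | insert q F hq ih =>
    rw [Finset.card_insert_of_notMem hq]
    exact ih.insert q (one_le_maderDegree r _)

theorem IsAttachment.hasTopKMinor (h : IsAttachment G A C B N)
    (hN : ∀ a ∈ A, maderDegree r (r * r) ≤ (N a).card) (hA : (2 * (r * r) + 1) * B.card < A.card) :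
    HasTopKMinor G r := by
  have hcard : (Finset.univ : Finset (Fin r × Fin r)).card = r * r := by simp
  have hforces := forcesPartialTopClique G κ (Finset.univ : Finset (Fin r × Fin r))
  rw [hcard] at hforces
  obtain ⟨f, P, hfP⟩ := hforces A C B N h hN hA
  exact hfP.hasTopKMinor

end Mader

/-! ### Few parts of a family see many other parts from a single vertex -/

section Heavy

section Saturation

variable {ι : Type*} [DecidableEq ι] {M I B : Finset ι} {J : ι → Finset ι} {K N q : ℕ}

theorem sum_min_card_inter_add_le {j : ι} (hj : j ∉ B) :
    (∑ i ∈ I, min (J i ∩ B).card N) + (I.filter fun i => (J i ∩ B).card < N ∧ j ∈ J i).card ≤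
      ∑ i ∈ I, min (J i ∩ insert j B).card N := by
  rw [Finset.card_filter, ← Finset.sum_add_distrib]
  refine Finset.sum_le_sum fun i _ => ?_
  split_ifs with hi
  · have hcard : (J i ∩ insert j B).card = (J i ∩ B).card + 1 := by
      rw [Finset.inter_insert_of_mem hi.2, Finset.card_insert_of_notMem (by simp [hj])]
    omega
  · have hcard : (J i ∩ B).card ≤ (J i ∩ insert j B).card :=
      Finset.card_le_card (Finset.inter_subset_inter_left (Finset.subset_insert _ _))
    omega

theorem exists_saturated_subset (M I : Finset ι) (J : ι → Finset ι) (N q : ℕ) :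
    ∃ B ⊆ M, q * B.card ≤ I.card * N ∧
      ∀ j ∈ M \ B, (I.filter fun i => (J i ∩ B).card < N ∧ j ∈ J i).card ≤ q := by
  obtain ⟨B, hB, hmax⟩ := Finset.exists_max_image
    (M.powerset.filter fun B => q * B.card ≤ ∑ i ∈ I, min (J i ∩ B).card N) Finset.card
    ⟨∅, by simp⟩
  simp only [Finset.mem_filter, Finset.mem_powerset] at hB hmax
  refine ⟨B, hB.1, hB.2.trans (Finset.sum_le_card_nsmul _ _ _ fun i _ => min_le_right _ _),
    fun j hj => ?_⟩
  rw [Finset.mem_sdiff] at hj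
  by_contra! hlt
  have hcard := Finset.card_insert_of_notMem hj.2
  have hle := hmax (insert j B) ⟨Finset.insert_subset hj.1 hB.1, by
    rw [hcard, mul_add]
    have := sum_min_card_inter_add_le (I := I) (J := J) (N := N) hj.2
    omega⟩
  omega

theorem mul_card_le_of_saturated (hJM : ∀ i ∈ I, J i ⊆ M) (hJ : ∀ i ∈ I, N + 8 * q ≤ (J i).card)
    (hq : 0 < q) (hB : ∀ j ∈ M \ B, (I.filter fun i => (J i ∩ B).card < N ∧ j ∈ J i).card ≤ q) :
    8 * (I.filter fun i => (J i ∩ B).card < N).card ≤ M.card := by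
  have hrow : ∀ i ∈ I.filter fun i => (J i ∩ B).card < N,
      8 * q ≤ ((M \ B).bipartiteAbove (fun i j => j ∈ J i) i).card := by
    intro i hi
    rw [Finset.mem_filter] at hi
    have hsub : J i \ B ⊆ (M \ B).bipartiteAbove (fun i j => j ∈ J i) i := fun j hj => by
      rw [Finset.mem_sdiff] at hj
      simp [Finset.mem_bipartiteAbove, hJM i hi.1 hj.1, hj]
    have hsplit := Finset.card_inter_add_card_sdiff (J i) B
    have := Finset.card_le_card hsub
    have := hJ i hi.1
    omega
  have hcol : ∀ j ∈ M \ B, ((I.filter fun i => (J i ∩ B).card < N).bipartiteBelow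
      (fun i j => j ∈ J i) j).card ≤ q := fun j hj => by
    simpa only [Finset.bipartiteBelow, Finset.filter_filter] using hB j hj
  have hcount := Finset.card_mul_le_card_mul (fun i j => j ∈ J i) hrow hcol
  have hM : (M \ B).card ≤ M.card := Finset.card_le_card Finset.sdiff_subset
  nlinarith

theorem exists_subset_mul_card_lt_card_filter (hN : 0 < N) (hI : I ⊆ M)
    (hJM : ∀ i ∈ I, J i ⊆ M) (hJ : ∀ i ∈ I, N + 8 * (8 * (K + 1) * N) ≤ (J i).card)
    (hM : M.card < 2 * I.card) :
    ∃ B ⊆ M, K * B.card < ((I \ B).filter fun i => N ≤ (J i ∩ B).card).card := by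
  obtain ⟨B, hBM, hBN, hB⟩ := exists_saturated_subset M I J N (8 * (K + 1) * N)
  refine ⟨B, hBM, ?_⟩
  have hunsat := mul_card_le_of_saturated hJM hJ (by positivity) hB
  have hBI : 8 * (K * B.card + B.card) ≤ I.card := by
    refine Nat.le_of_mul_le_mul_right ?_ hN
    calc 8 * (K * B.card + B.card) * N = 8 * (K + 1) * N * B.card := by ring
      _ ≤ I.card * N := hBN
  have hsplit : I ⊆ (I.filter fun i => (J i ∩ B).card < N) ∪ B ∪
      (I \ B).filter fun i => N ≤ (J i ∩ B).card := fun i hi => by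
    by_cases hiB : i ∈ B <;> simp [hi, hiB, lt_or_ge]
  have hcard := (Finset.card_le_card hsplit).trans <| (Finset.card_union_le _ _).trans <|
    Nat.add_le_add_right (Finset.card_union_le _ _) _
  have := Finset.card_le_card hI
  omega

end Saturation

variable {G : SimpleGraph V} {ι : Type*} {M I : Finset ι} {C : ι → Set V} {h : ι → V} {r : ℕ}

open Classical in
/-- The parts `C j`, `j ∈ M`, other than the part `C i`, that contain a neighbour of `v`. -/
noncomputable def neighborParts (G : SimpleGraph V) (C : ι → Set V) (M : Finset ι) (i : ι)
    (v : V) : Finset ι :=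
  M.filter fun j => j ≠ i ∧ ∃ u ∈ C j, G.Adj v u

theorem mem_neighborParts {i j : ι} {v : V} :
    j ∈ neighborParts G C M i v ↔ j ∈ M ∧ j ≠ i ∧ ∃ u ∈ C j, G.Adj v u := by
  simp [neighborParts]

/-- The number of neighbouring parts from which on a vertex counts as heavy: in a graph without a
topological `K_r` at most half of the parts of any family can contain a heavy vertex. -/
def heavyDegree (r : ℕ) : ℕ :=
  maderDegree r (r * r) + 8 * (8 * (2 * (r * r) + 1 + 1) * maderDegree r (r * r))

theorem two_mul_card_le_of_heavyDegree_le (hG : ¬ HasTopKMinor G r)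
    (hC : ∀ i ∈ M, (G.induce (C i)).Preconnected) (hd : (M : Set ι).PairwiseDisjoint C)
    (hI : I ⊆ M) (hh : ∀ i ∈ I, h i ∈ C i)
    (hdeg : ∀ i ∈ I, heavyDegree r ≤ (neighborParts G C M i (h i)).card) :
    2 * I.card ≤ M.card := by
  classical
  by_contra! hcard
  obtain ⟨B, hBM, hB⟩ := exists_subset_mul_card_lt_card_filter (one_le_maderDegree r (r * r)) hI
    (fun i _ => Finset.filter_subset _ M) hdeg hcard
  set A := (I \ B).filter fun i =>
    maderDegree r (r * r) ≤ (neighborParts G C M i (h i) ∩ B).card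
  have hAI : ∀ i ∈ A, i ∈ I := fun i hi => (Finset.mem_sdiff.1 (Finset.filter_subset _ _ hi)).1
  have eq_of_mem : ∀ i ∈ A, ∀ j ∈ M, h i ∈ C j → i = j := fun i hi j hj hij =>
    hd.elim_set (hI (hAI i hi)) hj _ (hh i (hAI i hi)) hij
  have hinj : Set.InjOn h A := fun i hi j hj hij =>
    eq_of_mem i hi j (hI (hAI j hj)) (hij ▸ hh j (hAI j hj))
  have hattach : IsAttachment G (A.image h) C B
      fun v => B.filter fun b => ∃ u ∈ C b, G.Adj v u :=
    { preconnected := fun b hb => hC b (hBM hb)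
      disjoint := hd.subset (Finset.coe_subset.2 hBM)
      notMem := by
        rintro b hb _ hv hvb
        obtain ⟨i, hi, rfl⟩ := Finset.mem_image.1 hv
        exact (Finset.mem_sdiff.1 (Finset.filter_subset _ _ hi)).2
          (eq_of_mem i hi b (hBM hb) hvb ▸ hb)
      subset := fun _ _ => Finset.filter_subset _ _
      adj := fun _ _ b hb => (Finset.mem_filter.1 hb).2 }
  refine hG (hattach.hasTopKMinor ?_ (by rwa [Finset.card_image_of_injOn hinj]))
  intro v hv
  obtain ⟨i, hi, rfl⟩ := Finset.mem_image.1 hv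
  refine (Finset.mem_filter.1 hi).2.trans (Finset.card_le_card fun j hj => ?_)
  rw [Finset.mem_inter, mem_neighborParts] at hj
  exact Finset.mem_filter.2 ⟨hj.2, hj.1.2.2⟩

end Heavy

/-! ### Degeneracy -/

section Degenerate

variable {G : SimpleGraph V} {S : Finset V} {d r : ℕ}

open Classical in
/-- The neighbours of `v` that lie in `S`. -/
noncomputable def neighborsIn (G : SimpleGraph V) (S : Finset V) (v : V) : Finset V :=
  S.filter (G.Adj v)

theorem mem_neighborsIn {v w : V} : w ∈ neighborsIn G S v ↔ w ∈ S ∧ G.Adj v w := by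
  simp [neighborsIn]

theorem neighborsIn_mono {U : Finset V} (h : U ⊆ S) (v : V) :
    neighborsIn G U v ⊆ neighborsIn G S v :=
  fun _ hw => mem_neighborsIn.2 ((mem_neighborsIn.1 hw).imp_left (@h _))

/-- The subgraph induced by `S` is `d`-degenerate. -/
def IsDegenerateOn (G : SimpleGraph V) (d : ℕ) (S : Finset V) : Prop :=
  ∀ U ⊆ S, U.Nonempty → ∃ v ∈ U, (neighborsIn G U v).card ≤ d

theorem isDegenerateOn_of_card_neighborsIn_le (h : ∀ v ∈ S, (neighborsIn G S v).card ≤ d) :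
    IsDegenerateOn G d S :=
  fun _ hU ⟨v, hv⟩ => ⟨v, hv, (Finset.card_le_card (neighborsIn_mono hU v)).trans (h v (hU hv))⟩

theorem isDegenerateOn_of_not_hasTopKMinor (hG : ¬ HasTopKMinor G r) (S : Finset V) :
    IsDegenerateOn G (heavyDegree r) S := by
  intro U _ hU
  by_contra! hdeg
  have hsub : ∀ v, neighborsIn G U v ⊆ neighborParts G (fun w => {w}) U v v := by
    intro v w hw
    rw [mem_neighborsIn] at hw
    exact mem_neighborParts.2 ⟨hw.1, hw.2.ne', w, rfl, hw.2⟩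
  have hcard := two_mul_card_le_of_heavyDegree_le (C := fun w => {w}) (h := id) hG
    (fun w _ => .of_subsingleton) (fun v _ w _ hvw => Set.disjoint_singleton.2 hvw)
    (Finset.Subset.refl U) (fun v _ => rfl)
    fun v hv => (hdeg v hv).le.trans (Finset.card_le_card (hsub v))
  have := Finset.card_pos.2 hU
  omega

theorem IsDegenerateOn.induction [DecidableEq V] {motive : Finset V → Prop} (empty : motive ∅)
    (insert : ∀ S v, v ∉ S → (neighborsIn G S v).card ≤ d → motive S → motive (insert v S))
    (h : IsDegenerateOn G d S) : motive S := by
  induction S using Finset.strongInduction with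
  | H S ih =>
    obtain rfl | hS := S.eq_empty_or_nonempty
    · exact empty
    obtain ⟨v, hv, hvd⟩ := h S subset_rfl hS
    rw [← Finset.insert_erase hv]
    refine insert _ v (Finset.notMem_erase v S)
      ((Finset.card_le_card (neighborsIn_mono (Finset.erase_subset v S) v)).trans hvd)
      (ih _ (Finset.erase_ssubset hv) fun U hU => h U (hU.trans (Finset.erase_subset v S)))

theorem forall_adj_insert [DecidableEq V] {R : V → V → Prop} (hR : ∀ u w, R u w → R w u) {v : V}
    (hv : ∀ w ∈ S, G.Adj v w → R v w) (hS : ∀ u ∈ S, ∀ w ∈ S, G.Adj u w → R u w) :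
    ∀ u ∈ insert v S, ∀ w ∈ insert v S, G.Adj u w → R u w := by
  intro u hu w hw huw
  rcases Finset.mem_insert.1 hu with rfl | huS <;> rcases Finset.mem_insert.1 hw with rfl | hwS
  exacts [absurd huw G.irrefl, hv w hwS huw, hR _ _ (hv u huS huw.symm), hS u huS w hwS huw]

/-- `col` is a proper colouring of the subgraph induced by `S`. -/
def IsColoringOn {κ : Type*} (G : SimpleGraph V) (S : Finset V) (col : V → κ) : Prop :=
  ∀ u ∈ S, ∀ v ∈ S, G.Adj u v → col u ≠ col v

theorem IsDegenerateOn.exists_isColoringOn (h : IsDegenerateOn G d S) :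
    ∃ col : V → Fin (d + 1), IsColoringOn G S col := by
  classical
  refine IsDegenerateOn.induction (motive := fun S => ∃ col : V → Fin (d + 1), IsColoringOn G S col)
    ⟨fun _ => 0, by simp [IsColoringOn]⟩ (fun S v hv hvd ⟨col, hcol⟩ => ?_) h
  obtain ⟨c, hc⟩ : ∃ c, c ∉ (neighborsIn G S v).image col := by
    simpa using Finset.exists_mem_notMem_of_card_lt_card (s := (neighborsIn G S v).image col)
      (t := Finset.univ) (by
        rw [Finset.card_univ, Fintype.card_fin]
        exact Nat.lt_succ_of_le (Finset.card_image_le.trans hvd))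
  have update_eq : ∀ w ∈ S, Function.update col v c w = col w := fun w hw =>
    Function.update_of_ne (ne_of_mem_of_not_mem hw hv) _ _
  refine ⟨Function.update col v c, forall_adj_insert (fun _ _ => Ne.symm) ?_ ?_⟩
  · intro w hw hvw hcw
    rw [Function.update_self, update_eq w hw] at hcw
    exact hc (Finset.mem_image.2 ⟨w, mem_neighborsIn.2 ⟨hw, hvw⟩, hcw.symm⟩)
  · intro u hu w hw huw
    rw [update_eq u hu, update_eq w hw]
    exact hcol u hu w hw huw

theorem exists_enumeration_of_card_le {N : Finset V} (hN : N.card ≤ d) (v : V) :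
    ∃ g : Fin d → V, ∀ w ∈ N, ∃ j, g j = w := by
  refine ⟨fun j => N.toList.getD j v, fun w hw => ?_⟩
  obtain ⟨j, hj, rfl⟩ := List.mem_iff_getElem.1 (Finset.mem_toList.2 hw)
  exact ⟨⟨j, hj.trans_le (by rwa [Finset.length_toList])⟩, List.getD_eq_getElem _ _ hj⟩

theorem IsDegenerateOn.exists_orientation (h : IsDegenerateOn G d S) :
    ∃ f : Fin d → V → V, ∀ u ∈ S, ∀ v ∈ S, G.Adj u v → ∃ j, f j u = v ∨ f j v = u := by
  classical
  refine IsDegenerateOn.induction (motive := fun S => ∃ f : Fin d → V → V,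
    ∀ u ∈ S, ∀ v ∈ S, G.Adj u v → ∃ j, f j u = v ∨ f j v = u)
    ⟨fun _ => id, by simp⟩ (fun S v hv hvd ⟨f, hf⟩ => ?_) h
  obtain ⟨g, hg⟩ := exists_enumeration_of_card_le hvd v
  have update_eq : ∀ j, ∀ w ∈ S, Function.update (f j) v (g j) w = f j w := fun j w hw =>
    Function.update_of_ne (ne_of_mem_of_not_mem hw hv) _ _
  refine ⟨fun j => Function.update (f j) v (g j),
    forall_adj_insert (fun _ _ ⟨j, hj⟩ => ⟨j, hj.symm⟩) ?_ ?_⟩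
  · intro w hw hvw
    obtain ⟨j, hj⟩ := hg w (mem_neighborsIn.2 ⟨hw, hvw⟩)
    exact ⟨j, .inl ((Function.update_self ..).trans hj)⟩
  · intro u hu w hw huw
    obtain ⟨j, hj⟩ := hf u hu w hw huw
    exact ⟨j, by simpa only [update_eq j u hu, update_eq j w hw] using hj⟩

end Degenerate

/-! ### Tight links -/

section TightLink

variable {G : SimpleGraph V} {A X Y : Set V} {x y : V} {p : G.Walk x y} {Q : Finset V} {i j : ℕ}

/-- `p` is a shortest walk among all `X`-`Y`-walks inside `A`. -/
structure IsShortestLink (G : SimpleGraph V) (A X Y : Set V) (p : G.Walk x y) : Prop where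
  left_mem : x ∈ X
  right_mem : y ∈ Y
  subset : ∀ w ∈ p.support, w ∈ A
  length_le : ∀ x' ∈ X, ∀ y' ∈ Y, ∀ q : G.Walk x' y', (∀ w ∈ q.support, w ∈ A) →
    p.length ≤ q.length

theorem LinkedIn.exists_isShortestLink (h : LinkedIn G A X Y) :
    ∃ x y, ∃ p : G.Walk x y, IsShortestLink G A X Y p := by
  classical
  have hex : ∃ n, ∃ x ∈ X, ∃ y ∈ Y, ∃ p : G.Walk x y, (∀ w ∈ p.support, w ∈ A) ∧ p.length = n := by
    obtain ⟨x, hx, y, hy, p, hp⟩ := h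
    exact ⟨_, x, hx, y, hy, p, hp, rfl⟩
  obtain ⟨x, hx, y, hy, p, hp, hlen⟩ := Nat.find_spec hex
  exact ⟨x, y, p, hx, hy, hp, fun x' hx' y' hy' q hq =>
    hlen.trans_le (Nat.find_min' hex ⟨x', hx', y', hy', q, hq, rfl⟩)⟩

namespace IsShortestLink

theorem take_subset (h : IsShortestLink G A X Y p) (i : ℕ) : ∀ w ∈ (p.take i).support, w ∈ A :=
  fun w hw => h.subset w ((p.isSubwalk_take i).support_subset hw)

theorem drop_subset (h : IsShortestLink G A X Y p) (i : ℕ) : ∀ w ∈ (p.drop i).support, w ∈ A :=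
  fun w hw => h.subset w ((p.isSubwalk_drop i).support_subset hw)

theorem getVert_mem_left_iff (h : IsShortestLink G A X Y p) (hi : i ≤ p.length) :
    p.getVert i ∈ X ↔ i = 0 := by
  refine ⟨fun hiX => ?_, fun hi => by rw [hi, Walk.getVert_zero]; exact h.left_mem⟩
  have hle := h.length_le _ hiX y h.right_mem (p.drop i) (h.drop_subset i)
  rw [Walk.drop_length] at hle
  omega

theorem getVert_mem_right_iff (h : IsShortestLink G A X Y p) (hi : i ≤ p.length) :
    p.getVert i ∈ Y ↔ i = p.length := by
  refine ⟨fun hiY => ?_, fun hi => by rw [hi, Walk.getVert_length]; exact h.right_mem⟩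
  have hle := h.length_le x h.left_mem _ hiY (p.take i) (h.take_subset i)
  rw [Walk.take_length] at hle
  omega

theorem isPath (h : IsShortestLink G A X Y p) : p.IsPath := by
  classical
  rw [← p.bypass_eq_self_of_length_le_length_bypass (h.length_le x h.left_mem y h.right_mem _
    fun w hw => h.subset w (p.support_bypass_subset_support hw))]
  exact p.bypass_isPath

theorem eq_succ_of_adj (h : IsShortestLink G A X Y p) (hij : i < j) (hj : j ≤ p.length)
    (hadj : G.Adj (p.getVert i) (p.getVert j)) : j = i + 1 := by
  have hle := h.length_le x h.left_mem y h.right_mem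
    ((p.take i).append ((p.drop j).cons hadj)) fun w hw => by
      rw [Walk.mem_support_append_iff, Walk.support_cons, List.mem_cons] at hw
      rcases hw with hw | rfl | hw
      exacts [h.take_subset i w hw, h.subset _ (p.getVert_mem_support i), h.drop_subset j w hw]
  rw [Walk.length_append, Walk.length_cons, Walk.take_length, Walk.drop_length] at hle
  omega

theorem neighborsIn_support [DecidableEq V] (h : IsShortestLink G A X Y p) (hi : i ≤ p.length) :
    neighborsIn G p.support.toFinset (p.getVert i) =
      (if i = 0 then ∅ else {p.getVert (i - 1)}) ∪
        (if i = p.length then ∅ else {p.getVert (i + 1)}) := by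
  have pred_adj : i ≠ 0 → G.Adj (p.getVert i) (p.getVert (i - 1)) := fun hi0 => by
    simpa [Nat.sub_add_cancel (Nat.pos_of_ne_zero hi0)] using
      (p.adj_getVert_succ (i := i - 1) (by omega)).symm
  ext w
  rw [mem_neighborsIn, List.mem_toFinset, Walk.mem_support_iff_exists_getVert, Finset.mem_union]
  constructor
  · rintro ⟨⟨j, rfl, hj⟩, hadj⟩
    rcases lt_trichotomy i j with hij | rfl | hij
    · obtain rfl := h.eq_succ_of_adj hij hj hadj
      exact .inr (by simp [show i ≠ p.length by omega])
    · exact absurd hadj G.irrefl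
    · obtain rfl := h.eq_succ_of_adj hij hi hadj.symm
      exact .inl (by simp)
  · rintro (hw | hw) <;> split_ifs at hw with hend <;> simp only [Finset.notMem_empty,
      Finset.mem_singleton] at hw <;> subst hw
    · exact ⟨⟨i - 1, rfl, by omega⟩, pred_adj hend⟩
    · exact ⟨⟨i + 1, rfl, by omega⟩, p.adj_getVert_succ (by omega)⟩

end IsShortestLink

open Classical in
/-- The degree of `v` into `Q`, where membership in `X` and in `Y` each count as one further
neighbour, so that every vertex of an induced `X`-`Y`-path, ends included, has degree two. -/
noncomputable def linkDegree (G : SimpleGraph V) (X Y : Set V) (Q : Finset V) (v : V) : ℕ :=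
  (neighborsIn G Q v).card + (if v ∈ X then 1 else 0) + (if v ∈ Y then 1 else 0)

theorem linkDegree_le_linkDegree {Q' : Finset V} {v : V}
    (h : neighborsIn G Q v ⊆ neighborsIn G Q' v) : linkDegree G X Y Q v ≤ linkDegree G X Y Q' v :=
  Nat.add_le_add_right (Nat.add_le_add_right (Finset.card_le_card h) _) _

theorem IsShortestLink.linkDegree_support [DecidableEq V] (h : IsShortestLink G A X Y p)
    (hi : i ≤ p.length) : linkDegree G X Y p.support.toFinset (p.getVert i) = 2 := by
  have hne : i ≠ 0 → i ≠ p.length → p.getVert (i - 1) ≠ p.getVert (i + 1) := fun _ _ heq => by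
    have := h.isPath.getVert_injOn (show i - 1 ≤ p.length by omega)
      (show i + 1 ≤ p.length by omega) heq
    omega
  rw [linkDegree, h.neighborsIn_support hi]
  simp only [h.getVert_mem_left_iff hi, h.getVert_mem_right_iff hi]
  split_ifs with hi0 hil hil
  · simp
  · simp
  · simp
  · simp [hne hi0 hil]

/-- `Q` is the vertex set of an induced `X`-`Y`-path that meets `X` and `Y` only in its ends. -/
structure IsTightLink (G : SimpleGraph V) (X Y : Set V) (Q : Finset V) : Prop where
  exists_path : ∃ x ∈ X, ∃ y ∈ Y, ∃ p : G.Walk x y, p.IsPath ∧ ∀ w, w ∈ p.support ↔ w ∈ Q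
  linkDegree_eq_two : ∀ v ∈ Q, linkDegree G X Y Q v = 2

theorem LinkedIn.exists_isTightLink (h : LinkedIn G A X Y) :
    ∃ Q : Finset V, (Q : Set V) ⊆ A ∧ IsTightLink G X Y Q := by
  classical
  obtain ⟨x, y, p, hp⟩ := h.exists_isShortestLink
  refine ⟨p.support.toFinset, fun w hw => hp.subset w (by simpa using hw),
    ⟨x, hp.left_mem, y, hp.right_mem, p, hp.isPath, by simp⟩, fun v hv => ?_⟩
  obtain ⟨i, rfl, hi⟩ := Walk.mem_support_iff_exists_getVert.1 (List.mem_toFinset.1 hv)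
  exact hp.linkDegree_support hi

theorem IsTightLink.linkedIn (h : IsTightLink G X Y Q) : LinkedIn G Q X Y := by
  obtain ⟨x, hx, y, hy, p, -, hp⟩ := h.exists_path
  exact ⟨x, hx, y, hy, p, fun w hw => (hp w).1 hw⟩

theorem IsTightLink.nonempty (h : IsTightLink G X Y Q) : Q.Nonempty := by
  obtain ⟨x, -, _, -, p, -, hp⟩ := h.exists_path
  exact ⟨x, (hp x).1 p.start_mem_support⟩

theorem IsTightLink.preconnected (h : IsTightLink G X Y Q) :
    (G.induce (Q : Set V)).Preconnected := by
  obtain ⟨x, -, y, -, p, -, hp⟩ := h.exists_path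
  have hQ : (Q : Set V) = {w | w ∈ p.support} := Set.ext fun w => (hp w).symm
  rw [hQ]
  exact p.connected_induce_support.preconnected

end TightLink

/-! ### Star contractions -/

section Contraction

variable {G : SimpleGraph V} {S : Finset V} {π : V → V} {A X Y : Set V}

/-- The fibres of `π` on `S` are stars of `G` inside `S`, each of which `π` maps to its centre. -/
structure IsStarContraction (G : SimpleGraph V) (S : Finset V) (π : V → V) : Prop where
  mem : ∀ v ∈ S, π v ∈ S
  idem : ∀ v ∈ S, π (π v) = π v
  eq_or_adj : ∀ v ∈ S, π v = v ∨ G.Adj v (π v)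

/-- The graph obtained from the subgraph induced by `S` by contracting the fibres of `π`. The
vertices outside `π '' S` are kept as isolated vertices. -/
def contractedGraph (G : SimpleGraph V) (S : Finset V) (π : V → V) : SimpleGraph V :=
  (G.induce (S : Set V)).map ((S : Set V).domRestrict π)

theorem LinkedIn.map_contractedGraph (h : LinkedIn G A X Y) (hA : A ⊆ S) :
    LinkedIn (contractedGraph G S π) (π '' A) (π '' (X ∩ S)) (π '' (Y ∩ S)) := by
  obtain ⟨x, hx, y, hy, p, hp⟩ := h
  suffices hwalk : LinkedIn (contractedGraph G S π) (π '' A) {π x} {π y} from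
    hwalk.mono le_rfl subset_rfl
      (Set.singleton_subset_iff.2 ⟨x, ⟨hx, hA (hp x p.start_mem_support)⟩, rfl⟩)
      (Set.singleton_subset_iff.2 ⟨y, ⟨hy, hA (hp y p.end_mem_support)⟩, rfl⟩)
  clear hx hy
  induction p with
  | nil => exact linkedIn_of_mem ⟨_, hp _ (by simp), rfl⟩ rfl rfl
  | @cons u v _ huv p ih =>
    have hu : u ∈ A := hp u (by simp)
    have hv : v ∈ A := hp v (by simp)
    have htail := ih fun w hw => hp w (by simp [hw])
    by_cases hπ : π u = π v
    · rwa [hπ]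
    · have hadj : (contractedGraph G S π).Adj (π u) (π v) :=
        ⟨hπ, ⟨u, hA hu⟩, ⟨v, hA hv⟩, huv, rfl, rfl⟩
      exact (linkedIn_singleton.trans_adj hadj htail).mono_set
        (Set.union_subset (Set.singleton_subset_iff.2 ⟨u, hu, rfl⟩) subset_rfl)

namespace IsStarContraction

theorem linkedIn_center (h : IsStarContraction G S π) {a : V} (ha : a ∈ S) :
    LinkedIn G (S ∩ π ⁻¹' {π a}) {a} {π a} := by
  have ha' : a ∈ (S ∩ π ⁻¹' {π a} : Set V) := ⟨ha, rfl⟩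
  rcases h.eq_or_adj a ha with heq | hadj
  · exact linkedIn_of_mem ha' rfl heq.symm
  · exact (linkedIn_singleton.trans_adj hadj linkedIn_singleton).mono_set (Set.union_subset
      (Set.singleton_subset_iff.2 ha') (Set.singleton_subset_iff.2 ⟨h.mem a ha, h.idem a ha⟩))

theorem linkedIn_fibre (h : IsStarContraction G S π) {a b : V} (ha : a ∈ S) (hb : b ∈ S)
    (hab : π a = π b) : LinkedIn G (S ∩ π ⁻¹' {π a}) {a} {b} := by
  have hb' := (h.linkedIn_center hb).symm
  rw [← hab] at hb'
  exact ((h.linkedIn_center ha).trans hb').mono_set (Set.union_self _).subset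

theorem linkedIn_of_contractedGraph (h : IsStarContraction G S π)
    (hA : LinkedIn (contractedGraph G S π) A (π '' (X ∩ S)) (π '' (Y ∩ S))) :
    LinkedIn G (S ∩ π ⁻¹' A) X Y := by
  obtain ⟨_, ⟨x, ⟨hx, hxS⟩, hxu⟩, _, ⟨y, ⟨hy, hyS⟩, hyv⟩, p, hp⟩ := hA
  suffices hwalk : LinkedIn G (S ∩ π ⁻¹' A) {x} {y} from
    hwalk.mono le_rfl subset_rfl (Set.singleton_subset_iff.2 hx) (Set.singleton_subset_iff.2 hy)
  clear hx
  have fibre_subset : ∀ {a}, π a ∈ A → (S ∩ π ⁻¹' {π a} : Set V) ⊆ S ∩ π ⁻¹' A := fun {a} haA =>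
    Set.inter_subset_inter_right _ (Set.preimage_mono (Set.singleton_subset_iff.2 haA))
  induction p generalizing x with
  | nil =>
    exact (h.linkedIn_fibre hxS hyS (hxu.trans hyv.symm)).mono_set
      (fibre_subset (hxu ▸ hp _ (by simp)))
  | cons huv p ih =>
    obtain ⟨-, ⟨a, haS⟩, ⟨b, hbS⟩, hab, hau, hbv⟩ := id huv
    have htail := ih b hbv hbS hyv fun w hw => hp w (by simp [hw])
    exact ((h.linkedIn_fibre hxS haS (hxu.trans hau.symm)).trans_adj hab htail).mono_set
      (Set.union_subset (fibre_subset (hxu ▸ hp _ (by simp))) subset_rfl)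

end IsStarContraction

open Classical in
/-- Contracts every vertex `v` of `S` onto `g v`, provided that `g v` is a neighbour of `v` in
`S ∩ D`. -/
noncomputable def contractOnto (G : SimpleGraph V) (S : Finset V) (D : Set V) (g : V → V)
    (v : V) : V :=
  if g v ∈ S ∧ g v ∈ D ∧ G.Adj v (g v) then g v else v

variable {D : Set V} {g : V → V}

theorem contractOnto_eq_self (hD : G.IsIndepSet (S ∩ D)) {u : V} (huS : u ∈ S) (huD : u ∈ D) :
    contractOnto G S D g u = u :=
  if_neg fun ⟨hgS, hgD, hadj⟩ => hD ⟨huS, huD⟩ ⟨hgS, hgD⟩ hadj.ne hadj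

theorem isStarContraction_contractOnto (hD : G.IsIndepSet (S ∩ D)) :
    IsStarContraction G S (contractOnto G S D g) := by
  have key : ∀ v ∈ S, contractOnto G S D g v ∈ S ∧
      contractOnto G S D g (contractOnto G S D g v) = contractOnto G S D g v ∧
      (contractOnto G S D g v = v ∨ G.Adj v (contractOnto G S D g v)) := by
    intro v hv
    by_cases hg : g v ∈ S ∧ g v ∈ D ∧ G.Adj v (g v)
    · have heq : contractOnto G S D g v = g v := if_pos hg
      rw [heq]
      exact ⟨hg.1, contractOnto_eq_self hD hg.1 hg.2.1, .inr hg.2.2⟩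
    · have heq : contractOnto G S D g v = v := if_neg hg
      rw [heq]
      exact ⟨hv, heq, .inl rfl⟩
  exact ⟨fun v hv => (key v hv).1, fun v hv => (key v hv).2.1, fun v hv => (key v hv).2.2⟩

end Contraction

/-! ### Packings of tight links -/

section Packing

variable {G : SimpleGraph V} {X Y D : Set V} {S : Finset V} {𝓟 𝓠 : Finset (Finset V)}
  {π : V → V} {m t r : ℕ}

/-- `𝓟` is a family of pairwise disjoint tight `X`-`Y`-links with union `S`. -/
structure IsTightPacking (G : SimpleGraph V) (X Y : Set V) (S : Finset V)
    (𝓟 : Finset (Finset V)) : Prop where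
  isTightLink : ∀ Q ∈ 𝓟, IsTightLink G X Y Q
  disjoint : (𝓟 : Set (Finset V)).PairwiseDisjoint id
  mem_iff : ∀ v, v ∈ S ↔ ∃ Q ∈ 𝓟, v ∈ Q

/-- The number of links of `𝓟` other than `Q` that contain a neighbour of `v`. -/
noncomputable abbrev linkCodegree (G : SimpleGraph V) (𝓟 : Finset (Finset V)) (Q : Finset V)
    (v : V) : ℕ :=
  (neighborParts G (fun Q : Finset V => (Q : Set V)) 𝓟 Q v).card

theorem exists_isTightPacking_of_linkedIn [DecidableEq V] {A : Fin m → Set V}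
    (hA : ∀ i, LinkedIn G (A i) X Y) (hd : Pairwise fun i j => Disjoint (A i) (A j)) :
    ∃ (S : Finset V) (Q : Fin m → Finset V), IsTightPacking G X Y S (Finset.univ.image Q) ∧
      (Finset.univ.image Q).card = m ∧ ∀ i, (Q i : Set V) ⊆ A i := by
  choose Q hQA hQ using fun i => (hA i).exists_isTightLink
  have hQd : ∀ i j, i ≠ j → Disjoint (Q i) (Q j) := fun i j hij =>
    Finset.disjoint_coe.1 ((hd hij).mono (hQA i) (hQA j))
  have hinj : Function.Injective Q := fun i j hij => by
    by_contra hne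
    have hdis := hQd i j hne
    rw [← hij, disjoint_self] at hdis
    exact (hQ i).nonempty.ne_empty hdis
  refine ⟨(Finset.univ.image Q).biUnion id, Q, ⟨by simpa using hQ, ?_, by simp⟩, ?_, hQA⟩
  · rw [Finset.coe_image, Finset.coe_univ, Set.image_univ]
    rintro _ ⟨i, rfl⟩ _ ⟨j, rfl⟩ hij
    exact hQd i j (ne_of_apply_ne Q hij)
  · rw [Finset.card_image_of_injective _ hinj, Finset.card_univ, Fintype.card_fin]

namespace IsTightPacking

theorem subset (h : IsTightPacking G X Y S 𝓟) {Q : Finset V} (hQ : Q ∈ 𝓟) : Q ⊆ S :=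
  fun v hv => (h.mem_iff v).2 ⟨Q, hQ, hv⟩

theorem exists_subfamily (h : IsTightPacking G X Y S 𝓟) (h𝓠 : 𝓠 ⊆ 𝓟) :
    ∃ S' ⊆ S, IsTightPacking G X Y S' 𝓠 := by
  classical
  exact ⟨𝓠.biUnion id, Finset.biUnion_subset.2 fun Q hQ => h.subset (h𝓠 hQ),
    fun Q hQ => h.isTightLink Q (h𝓠 hQ), h.disjoint.subset (Finset.coe_subset.2 h𝓠), by simp⟩

theorem exists_light (h : IsTightPacking G X Y S 𝓟) (hG : ¬ HasTopKMinor G r)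
    (hm : 2 * m ≤ 𝓟.card) :
    ∃ S' ⊆ S, ∃ 𝓠, IsTightPacking G X Y S' 𝓠 ∧ m ≤ 𝓠.card ∧
      ∀ Q ∈ 𝓠, ∀ v ∈ Q, linkCodegree G 𝓠 Q v ≤ heavyDegree r := by
  classical
  set heavy := 𝓟.filter fun Q => ∃ v ∈ Q, heavyDegree r ≤ linkCodegree G 𝓟 Q v
  have hsub : heavy ⊆ 𝓟 := Finset.filter_subset _ _
  have hcard : 2 * heavy.card ≤ 𝓟.card := by
    obtain hempty | ⟨Q₀, hQ₀⟩ := heavy.eq_empty_or_nonempty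
    · simp [hempty]
    obtain ⟨v₀, -⟩ := (h.isTightLink Q₀ (hsub hQ₀)).nonempty
    have : Nonempty V := ⟨v₀⟩
    choose! center hmem hdeg using fun Q (hQ : Q ∈ heavy) => (Finset.mem_filter.1 hQ).2
    exact two_mul_card_le_of_heavyDegree_le hG (fun Q hQ => (h.isTightLink Q hQ).preconnected)
      (fun Q hQ Q' hQ' hne => Finset.disjoint_coe.2 (h.disjoint hQ hQ' hne)) hsub hmem hdeg
  obtain ⟨S', hS', h𝓠⟩ := h.exists_subfamily (Finset.sdiff_subset (s := 𝓟) (t := heavy))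
  refine ⟨S', hS', 𝓟 \ heavy, h𝓠, ?_, fun Q hQ v hv => ?_⟩
  · rw [Finset.card_sdiff_of_subset hsub]
    omega
  · rw [Finset.mem_sdiff] at hQ
    by_contra! hlt
    refine hQ.2 (Finset.mem_filter.2 ⟨hQ.1, v, hv, hlt.le.trans (Finset.card_le_card ?_)⟩)
    exact fun Q' hQ' => mem_neighborParts.2 <| (mem_neighborParts.1 hQ').imp_left
      fun hQ' => Finset.sdiff_subset hQ'

theorem linkCodegree_le_card_neighborsIn (h : IsTightPacking G X Y S 𝓟) (Q : Finset V) (v : V) :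
    linkCodegree G 𝓟 Q v ≤ (neighborsIn G S v).card := by
  have : Nonempty V := ⟨v⟩
  choose! hmem _ w hwQ hw using
    fun Q' (hQ' : Q' ∈ neighborParts G (fun Q : Finset V => (Q : Set V)) 𝓟 Q v) =>
      mem_neighborParts.1 hQ'
  refine Finset.card_le_card_of_injOn w
    (fun Q' hQ' => mem_neighborsIn.2 ⟨h.subset (hmem Q' hQ') (hwQ Q' hQ'), hw Q' hQ'⟩)
    fun Q₁ h₁ Q₂ h₂ heq => ?_
  exact h.disjoint.elim_finset (hmem Q₁ h₁) (hmem Q₂ h₂) _ (hwQ Q₁ h₁) (heq ▸ hwQ Q₂ h₂)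

theorem card_filter_mem_image_le [DecidableEq V] (h : IsTightPacking G X Y S 𝓟)
    (hπ : IsStarContraction G S π) (hdeg : ∀ Q ∈ 𝓟, ∀ v ∈ Q, linkCodegree G 𝓟 Q v ≤ t) {u : V}
    (hu : u ∈ S) : (𝓟.filter fun Q => u ∈ Q.image π).card ≤ t + 1 := by
  obtain ⟨Q₀, hQ₀, huQ₀⟩ := (h.mem_iff u).1 hu
  refine le_trans (Finset.card_le_card fun Q hQu => ?_)
    ((Finset.card_insert_le Q₀ _).trans (Nat.add_le_add_right (hdeg Q₀ hQ₀ u huQ₀) 1))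
  obtain ⟨hQ, w, hw, rfl⟩ := by simpa only [Finset.mem_filter, Finset.mem_image] using hQu
  refine Finset.mem_insert.2 (or_iff_not_imp_left.2 fun hne =>
    mem_neighborParts.2 ⟨hQ, hne, w, hw, ?_⟩)
  rcases hπ.eq_or_adj w (h.subset hQ hw) with heq | hadj
  · exact absurd (h.disjoint.elim_finset hQ hQ₀ w hw (heq ▸ huQ₀)) hne
  · exact hadj.symm

/-- A separator of the contracted graph meets the image of every link, but each of its vertices
lies in the images of at most `t + 1` links. -/
theorem hasLinkage_contractedGraph (h : IsTightPacking G X Y S 𝓟) (hπ : IsStarContraction G S π)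
    (hdeg : ∀ Q ∈ 𝓟, ∀ v ∈ Q, linkCodegree G 𝓟 Q v ≤ t) (hm : (t + 1) * m ≤ 𝓟.card) :
    HasLinkage (contractedGraph G S π) (π '' (X ∩ S)) (π '' (Y ∩ S)) m := by
  classical
  refine (menger _ _ _ m).resolve_right fun ⟨Z, hZ, hsep⟩ => ?_
  have hcover : 𝓟 ⊆ (Z ∩ S).biUnion fun z => 𝓟.filter fun Q => z ∈ Q.image π := by
    intro Q hQ
    have hlink := (h.isTightLink Q hQ).linkedIn.map_contractedGraph (π := π)
      (Finset.coe_subset.2 (h.subset hQ))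
    obtain ⟨z, hzQ, hzZ⟩ : ∃ z ∈ π '' Q, z ∈ Z := by
      by_contra! hno
      exact hsep (hlink.mono_set hno)
    obtain ⟨w, hw, rfl⟩ := hzQ
    exact Finset.mem_biUnion.2 ⟨π w, Finset.mem_inter.2 ⟨hzZ, hπ.mem w (h.subset hQ hw)⟩,
      Finset.mem_filter.2 ⟨hQ, Finset.mem_image_of_mem π hw⟩⟩
  have hcard := (Finset.card_le_card hcover).trans <| Finset.card_biUnion_le_card_mul _ _ (t + 1)
    fun z hz => h.card_filter_mem_image_le hπ hdeg (Finset.mem_inter.1 hz).2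
  have hZS : (Z ∩ S).card ≤ Z.card := Finset.card_le_card Finset.inter_subset_left
  nlinarith

theorem exists_saturated (h : IsTightPacking G X Y S 𝓟) (hπ : IsStarContraction G S π)
    (hdeg : ∀ Q ∈ 𝓟, ∀ v ∈ Q, linkCodegree G 𝓟 Q v ≤ t) (hm : (t + 1) * m ≤ 𝓟.card) :
    ∃ S' ⊆ S, ∃ 𝓠, IsTightPacking G X Y S' 𝓠 ∧ m ≤ 𝓠.card ∧
      ∀ Q ∈ 𝓠, ∀ v ∈ Q, ∀ w ∈ S', π v = π w → w ∈ Q := by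
  classical
  obtain ⟨A, hA, hd⟩ := h.hasLinkage_contractedGraph hπ hdeg hm
  obtain ⟨S', Q, hQ, hcard, hQA⟩ := exists_isTightPacking_of_linkedIn
    (fun i => hπ.linkedIn_of_contractedGraph (hA i)) fun i j hij =>
      ((hd hij).preimage π).mono Set.inter_subset_right Set.inter_subset_right
  have hmem : ∀ v ∈ S', ∃ i, v ∈ Q i := fun v hv => by simpa using (hQ.mem_iff v).1 hv
  refine ⟨S', fun v hv => ?_, Finset.univ.image Q, hQ, hcard.ge, ?_⟩
  · obtain ⟨i, hi⟩ := hmem v hv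
    exact (hQA i hi).1
  · intro _ hQi v hv w hw hvw
    obtain ⟨i, -, rfl⟩ := Finset.mem_image.1 hQi
    obtain ⟨j, hj⟩ := hmem w hw
    obtain rfl : i = j := by
      by_contra hij
      exact Set.disjoint_left.1 (hd hij) (hQA i hv).2 (by simpa [hvw] using (hQA j hj).2)
    exact hj

theorem exists_absorbing (h : IsTightPacking G X Y S 𝓟) (hD : G.IsIndepSet (S ∩ D)) (g : V → V)
    (hdeg : ∀ Q ∈ 𝓟, ∀ v ∈ Q, linkCodegree G 𝓟 Q v ≤ t) (hm : (t + 1) * m ≤ 𝓟.card) :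
    ∃ S' ⊆ S, ∃ 𝓠, IsTightPacking G X Y S' 𝓠 ∧ m ≤ 𝓠.card ∧
      ∀ Q ∈ 𝓠, ∀ u ∈ Q, u ∈ D → ∀ v ∈ S', G.Adj u v → g v = u → v ∈ Q := by
  obtain ⟨S', hS', 𝓠, h𝓠, hcard, hsat⟩ :=
    h.exists_saturated (isStarContraction_contractOnto (g := g) hD) hdeg hm
  refine ⟨S', hS', 𝓠, h𝓠, hcard, fun Q hQ u hu huD v hv huv hgv => hsat Q hQ u hu v hv ?_⟩
  have huS : u ∈ S := hS' (h𝓠.subset hQ hu)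
  subst hgv
  rw [contractOnto_eq_self hD huS huD]
  exact (if_pos ⟨huS, huD, huv.symm⟩).symm

end IsTightPacking

end Packing

/-! ### Enforcing sparsity -/

section Enforce

variable {G : SimpleGraph V} {X Y : Set V} {S S₀ : Finset V} {Good Good' : Finset V → Prop}
  {d k m r s t : ℕ}

/-- `S` is the vertex set of a packing of at least `m` tight `X`-`Y`-links. -/
def HasTightPacking (G : SimpleGraph V) (X Y : Set V) (S : Finset V) (m : ℕ) : Prop :=
  ∃ 𝓟, IsTightPacking G X Y S 𝓟 ∧ m ≤ 𝓟.card

/-- Every packing inside `S₀` can be replaced by one on a subset of its vertices that satisfies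
`Good`, at the price of dividing the number of links by `s`. -/
def Enforceable (G : SimpleGraph V) (X Y : Set V) (S₀ : Finset V) (s : ℕ)
    (Good : Finset V → Prop) : Prop :=
  ∀ S ⊆ S₀, ∀ m, HasTightPacking G X Y S (s * m) →
    ∃ S' ⊆ S, HasTightPacking G X Y S' m ∧ Good S'

theorem HasLinkage.exists_hasTightPacking (h : HasLinkage G X Y m) :
    ∃ S, HasTightPacking G X Y S m := by
  classical
  obtain ⟨A, hA, hd⟩ := h
  obtain ⟨S, Q, hQ, hcard, -⟩ := exists_isTightPacking_of_linkedIn hA hd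
  exact ⟨S, _, hQ, hcard.ge⟩

theorem Enforceable.imp (h : Enforceable G X Y S₀ s Good)
    (himp : ∀ S ⊆ S₀, Good S → Good' S) : Enforceable G X Y S₀ s Good' := fun S hS m hm => by
  obtain ⟨S', hS', hpack, hgood⟩ := h S hS m hm
  exact ⟨S', hS', hpack, himp S' (hS'.trans hS) hgood⟩

theorem Enforceable.forall_mem {κ : Type*} {Good : κ → Finset V → Prop}
    (h : ∀ i, Enforceable G X Y S₀ s (Good i)) (hanti : ∀ i, Antitone (Good i)) (E : Finset κ) :
    Enforceable G X Y S₀ (s ^ E.card) fun S => ∀ i ∈ E, Good i S := by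
  classical
  induction E using Finset.induction with
  | empty => exact fun S _ m hm => ⟨S, subset_rfl, by simpa using hm, by simp⟩
  | insert i E hi ih =>
    intro S hS m hm
    rw [Finset.card_insert_of_notMem hi, pow_succ, mul_assoc] at hm
    obtain ⟨S₁, hS₁, hm₁, hgood₁⟩ := ih S hS _ hm
    obtain ⟨S₂, hS₂, hm₂, hgood₂⟩ := h i S₁ (hS₁.trans hS) m hm₁
    exact ⟨S₂, hS₂.trans hS₁, hm₂, Finset.forall_mem_insert _ _ _ |>.2
      ⟨hgood₂, fun j hj => hanti j hS₂ (hgood₁ j hj)⟩⟩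

theorem Enforceable.forall {κ : Type*} [Fintype κ] {Good : κ → Finset V → Prop}
    (h : ∀ i, Enforceable G X Y S₀ s (Good i)) (hanti : ∀ i, Antitone (Good i)) :
    Enforceable G X Y S₀ (s ^ Fintype.card κ) fun S => ∀ i, Good i S :=
  (Enforceable.forall_mem h hanti Finset.univ).imp fun _ _ hgood i => hgood i (Finset.mem_univ i)

theorem IsColoringOn.isIndepSet {κ : Type*} {col : V → κ} (h : IsColoringOn G S₀ col)
    (hS : S ⊆ S₀) (c : κ) : G.IsIndepSet (S ∩ {v | col v = c}) :=
  fun u hu v hv _ huv => h u (hS hu.1) v (hS hv.1) huv (hu.2.trans hv.2.symm)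

theorem IsTightLink.card_le_two_of_subset_neighborsIn {Q : Finset V} {u : V}
    (h : IsTightLink G X Y Q) (hu : u ∈ Q) {N : Finset V} (hN : N ⊆ neighborsIn G Q u) :
    N.card ≤ 2 := by
  have hdeg := h.linkDegree_eq_two u hu
  rw [linkDegree] at hdeg
  exact (Finset.card_le_card hN).trans (by omega)

open Classical in
/-- The neighbours of `u` in `S` that `g` maps to `u`. -/
noncomputable def inNeighborsIn (G : SimpleGraph V) (g : V → V) (S : Finset V) (u : V) :
    Finset V :=
  (neighborsIn G S u).filter fun v => g v = u

theorem mem_inNeighborsIn {g : V → V} {u v : V} :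
    v ∈ inNeighborsIn G g S u ↔ (v ∈ S ∧ G.Adj u v) ∧ g v = u := by
  simp [inNeighborsIn, mem_neighborsIn]

theorem inNeighborsIn_mono {g : V → V} (h : S ⊆ S₀) (u : V) :
    inNeighborsIn G g S u ⊆ inNeighborsIn G g S₀ u :=
  fun _ hv => mem_inNeighborsIn.2 ((mem_inNeighborsIn.1 hv).imp_left (And.imp_left (@h _)))

theorem enforceable_card_inNeighborsIn_le_two {κ : Type*} {col : V → κ} (hG : ¬ HasTopKMinor G r)
    (hcol : IsColoringOn G S₀ col) (g : V → V) (c : κ) :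
    Enforceable G X Y S₀ (2 * (heavyDegree r + 1)) fun S =>
      ∀ u ∈ S, col u = c → (inNeighborsIn G g S u).card ≤ 2 := by
  rintro S hS m ⟨𝓟, h𝓟, hm⟩
  rw [mul_assoc] at hm
  obtain ⟨S₁, hS₁, 𝓟₁, h𝓟₁, hm₁, hlight⟩ := h𝓟.exists_light hG hm
  obtain ⟨S₂, hS₂, 𝓟₂, h𝓟₂, hm₂, habs⟩ :=
    h𝓟₁.exists_absorbing (hcol.isIndepSet (hS₁.trans hS) c) g hlight hm₁
  refine ⟨S₂, hS₂.trans hS₁, ⟨𝓟₂, h𝓟₂, hm₂⟩, fun u hu huc => ?_⟩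
  obtain ⟨Q, hQ, huQ⟩ := (h𝓟₂.mem_iff u).1 hu
  refine (h𝓟₂.isTightLink Q hQ).card_le_two_of_subset_neighborsIn huQ fun v hv => ?_
  obtain ⟨⟨hvS, huv⟩, hgv⟩ := mem_inNeighborsIn.1 hv
  exact mem_neighborsIn.2 ⟨habs Q hQ u huQ huc v hvS huv hgv, huv⟩

theorem card_neighborsIn_le_of_orientation {f : Fin d → V → V}
    (hf : ∀ u ∈ S, ∀ v ∈ S, G.Adj u v → ∃ j, f j u = v ∨ f j v = u) {u : V} (hu : u ∈ S)
    (hin : ∀ j, (inNeighborsIn G (f j) S u).card ≤ t) :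
    (neighborsIn G S u).card ≤ (t + 1) * d := by
  classical
  have hsub : neighborsIn G S u ⊆
      Finset.univ.biUnion fun j => insert (f j u) (inNeighborsIn G (f j) S u) := by
    intro v hv
    obtain ⟨hvS, huv⟩ := mem_neighborsIn.1 hv
    obtain ⟨j, hj⟩ := hf u hu v hvS huv
    exact Finset.mem_biUnion.2 ⟨j, Finset.mem_univ j, Finset.mem_insert.2 <|
      hj.imp Eq.symm fun hj => mem_inNeighborsIn.2 ⟨⟨hvS, huv⟩, hj⟩⟩
  calc (neighborsIn G S u).card ≤ _ := Finset.card_le_card hsub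
    _ ≤ (Finset.univ : Finset (Fin d)).card * (t + 1) :=
      Finset.card_biUnion_le_card_mul _ _ _ fun j _ =>
        (Finset.card_insert_le _ _).trans (Nat.add_le_add_right (hin j) 1)
    _ = (t + 1) * d := by rw [Finset.card_univ, Fintype.card_fin, mul_comm]

theorem enforceable_card_neighborsIn_le (hG : ¬ HasTopKMinor G r) (S₀ : Finset V) :
    Enforceable G X Y S₀
      ((2 * (heavyDegree r + 1)) ^ (heavyDegree r * (heavyDegree r + 1))) fun S =>
        ∀ u ∈ S, (neighborsIn G S u).card ≤ 3 * heavyDegree r := by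
  have hdegen := isDegenerateOn_of_not_hasTopKMinor hG S₀
  obtain ⟨f, hf⟩ := hdegen.exists_orientation
  obtain ⟨col, hcol⟩ := hdegen.exists_isColoringOn
  have henf := Enforceable.forall (X := X) (Y := Y)
    (fun i : Fin (heavyDegree r) × Fin (heavyDegree r + 1) =>
      enforceable_card_inNeighborsIn_le_two hG hcol (f i.1) i.2)
    fun i S S' hS hgood u hu huc =>
      (Finset.card_le_card (inNeighborsIn_mono hS u)).trans (hgood u (hS hu) huc)
  rw [Fintype.card_prod, Fintype.card_fin, Fintype.card_fin] at henf
  exact henf.imp fun S hS hgood u hu => card_neighborsIn_le_of_orientation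
    (fun v hv w hw => hf v (hS hv) w (hS hw)) hu fun j => hgood (j, col u) u hu rfl

/-- The square of the subgraph induced by `S`: vertices are joined if they are adjacent or have a
common neighbour in `S`. -/
def squareOn (G : SimpleGraph V) (S : Finset V) : SimpleGraph V :=
  SimpleGraph.fromRel fun u v => G.Adj u v ∨ ∃ w ∈ S, G.Adj u w ∧ G.Adj w v

theorem squareOn_adj_of_adj {u v : V} (h : G.Adj u v) : (squareOn G S).Adj u v :=
  (SimpleGraph.fromRel_adj ..).2 ⟨h.ne, .inl (.inl h)⟩

theorem squareOn_adj_of_common_neighbor {u v w : V} (huv : u ≠ v) (hw : w ∈ S) (huw : G.Adj u w)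
    (hwv : G.Adj w v) : (squareOn G S).Adj u v :=
  (SimpleGraph.fromRel_adj ..).2 ⟨huv, .inl (.inr ⟨w, hw, huw, hwv⟩)⟩

theorem card_neighborsIn_squareOn_le (h : ∀ v ∈ S, (neighborsIn G S v).card ≤ d) {u : V}
    (hu : u ∈ S) : (neighborsIn (squareOn G S) S u).card ≤ d + d * d := by
  classical
  have hsub : neighborsIn (squareOn G S) S u ⊆
      neighborsIn G S u ∪ (neighborsIn G S u).biUnion (neighborsIn G S) := by
    intro v hv
    obtain ⟨hvS, hadj⟩ := mem_neighborsIn.1 hv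
    have hadj : G.Adj u v ∨ ∃ w ∈ S, G.Adj u w ∧ G.Adj w v := by
      rcases ((SimpleGraph.fromRel_adj ..).1 hadj).2 with hadj | hvu | ⟨w, hw, hvw, hwu⟩
      exacts [hadj, .inl hvu.symm, .inr ⟨w, hw, hwu.symm, hvw.symm⟩]
    refine Finset.mem_union.2 (hadj.imp (fun huv => mem_neighborsIn.2 ⟨hvS, huv⟩) ?_)
    exact fun ⟨w, hw, huw, hwv⟩ => Finset.mem_biUnion.2
      ⟨w, mem_neighborsIn.2 ⟨hw, huw⟩, mem_neighborsIn.2 ⟨hvS, hwv⟩⟩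
  calc (neighborsIn (squareOn G S) S u).card
      ≤ (neighborsIn G S u).card + ((neighborsIn G S u).biUnion (neighborsIn G S)).card :=
        (Finset.card_le_card hsub).trans (Finset.card_union_le _ _)
    _ ≤ d + (neighborsIn G S u).card * d := Nat.add_le_add (h u hu) <|
        Finset.card_biUnion_le_card_mul _ _ _ fun w hw => h w (mem_neighborsIn.1 hw).1
    _ ≤ d + d * d := Nat.add_le_add_left (Nat.mul_le_mul_right d (h u hu)) d

theorem IsColoringOn.of_squareOn {κ : Type*} {col : V → κ}
    (h : IsColoringOn (squareOn G S) S col) : IsColoringOn G S col :=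
  fun u hu v hv huv => h u hu v hv (squareOn_adj_of_adj huv)

/-- In a colouring of the square a vertex has at most one neighbour of each colour, so that all
neighbours of the vertices of a given colour can be absorbed at once. -/
theorem IsColoringOn.exists_neighbor_of_color {κ : Type*} {col : V → κ}
    (h : IsColoringOn (squareOn G S) S col) (c : κ) :
    ∃ g : V → V, ∀ u ∈ S, ∀ v ∈ S, G.Adj u v → col u = c → g v = u := by
  have hex : ∀ v, ∃ w, ∀ u ∈ S, v ∈ S → G.Adj u v → col u = c → w = u := by
    intro v
    by_cases hw : ∃ w ∈ S, G.Adj w v ∧ col w = c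
    · obtain ⟨w, hw, hwv, hwc⟩ := hw
      refine ⟨w, fun u hu hv huv huc => by_contra fun hne => ?_⟩
      exact h w hw u hu (squareOn_adj_of_common_neighbor hne hv hwv huv.symm) (hwc.trans huc.symm)
    · exact ⟨v, fun u hu _ huv huc => (hw ⟨u, hu, huv, huc⟩).elim⟩
  choose g hg using hex
  exact ⟨g, fun u hu v hv => hg v u hu hv⟩

theorem enforceable_linkDegree_le_two_of_color {κ : Type*} {col : V → κ}
    (hdeg : ∀ v ∈ S₀, (neighborsIn G S₀ v).card ≤ d)
    (hcol : IsColoringOn (squareOn G S₀) S₀ col) (c : κ) :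
    Enforceable G X Y S₀ (d + 1) fun S => ∀ u ∈ S, col u = c → linkDegree G X Y S u ≤ 2 := by
  obtain ⟨g, hg⟩ := hcol.exists_neighbor_of_color c
  rintro S hS m ⟨𝓟, h𝓟, hm⟩
  have hcodeg : ∀ Q ∈ 𝓟, ∀ v ∈ Q, linkCodegree G 𝓟 Q v ≤ d := fun Q hQ v hv =>
    (h𝓟.linkCodegree_le_card_neighborsIn Q v).trans <|
      (Finset.card_le_card (neighborsIn_mono hS v)).trans (hdeg v (hS (h𝓟.subset hQ hv)))
  obtain ⟨S', hS', 𝓠, h𝓠, hm', habs⟩ :=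
    h𝓟.exists_absorbing (hcol.of_squareOn.isIndepSet hS c) g hcodeg hm
  refine ⟨S', hS', ⟨𝓠, h𝓠, hm'⟩, fun u hu huc => ?_⟩
  obtain ⟨Q, hQ, huQ⟩ := (h𝓠.mem_iff u).1 hu
  refine (linkDegree_le_linkDegree fun v hv => ?_).trans
    ((h𝓠.isTightLink Q hQ).linkDegree_eq_two u huQ).le
  obtain ⟨hvS, huv⟩ := mem_neighborsIn.1 hv
  have hSS₀ := hS'.trans hS
  exact mem_neighborsIn.2
    ⟨habs Q hQ u huQ huc v hvS huv (hg u (hSS₀ hu) v (hSS₀ hvS) huv huc), huv⟩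

theorem enforceable_linkDegree_le_two (hdeg : ∀ v ∈ S₀, (neighborsIn G S₀ v).card ≤ d) :
    Enforceable G X Y S₀ ((d + 1) ^ (d + d * d + 1)) fun S =>
      ∀ u ∈ S, linkDegree G X Y S u ≤ 2 := by
  obtain ⟨col, hcol⟩ := (isDegenerateOn_of_card_neighborsIn_le
    fun v hv => card_neighborsIn_squareOn_le hdeg hv).exists_isColoringOn
  have henf := Enforceable.forall (X := X) (Y := Y)
    (enforceable_linkDegree_le_two_of_color hdeg hcol) fun c S S' hS hgood u hu huc =>
      (linkDegree_le_linkDegree (neighborsIn_mono hS u)).trans (hgood u (hS hu) huc)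
  rw [Fintype.card_fin] at henf
  exact henf.imp fun S _ hgood u hu => hgood (col u) u hu rfl

/-- The number of links that have to be given up for each link of an induced packing. -/
noncomputable def packingCost (r : ℕ) : ℕ :=
  (2 * (heavyDegree r + 1)) ^ (heavyDegree r * (heavyDegree r + 1)) *
    (3 * heavyDegree r + 1) ^ (3 * heavyDegree r + 3 * heavyDegree r * (3 * heavyDegree r) + 1)

theorem packingCost_pos (r : ℕ) : 0 < packingCost r := by
  unfold packingCost
  positivity

theorem HasTightPacking.exists_linkDegree_le_two (hG : ¬ HasTopKMinor G r)
    (h : HasTightPacking G X Y S (packingCost r * k)) :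
    ∃ S', HasTightPacking G X Y S' k ∧ ∀ u ∈ S', linkDegree G X Y S' u ≤ 2 := by
  rw [packingCost, mul_assoc] at h
  obtain ⟨S₁, -, h₁, hdeg⟩ := enforceable_card_neighborsIn_le hG S S subset_rfl _ h
  obtain ⟨S₂, -, h₂, hlink⟩ := enforceable_linkDegree_le_two hdeg S₁ subset_rfl _ h₁
  exact ⟨S₂, h₂, hlink⟩

/-- A vertex already has degree two inside its own link, so a neighbour in another link would be a
third. -/
theorem IsTightPacking.not_adj {𝓟 : Finset (Finset V)} (h : IsTightPacking G X Y S 𝓟)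
    (hdeg : ∀ u ∈ S, linkDegree G X Y S u ≤ 2) {Q Q' : Finset V} (hQ : Q ∈ 𝓟) (hQ' : Q' ∈ 𝓟)
    (hne : Q ≠ Q') {a b : V} (ha : a ∈ Q) (hb : b ∈ Q') : ¬ G.Adj a b := by
  intro hab
  have hbQ : b ∉ Q := Finset.disjoint_right.1 (h.disjoint hQ hQ' hne) hb
  have hlt : (neighborsIn G Q a).card < (neighborsIn G S a).card :=
    Finset.card_lt_card <| (Finset.ssubset_iff_of_subset (neighborsIn_mono (h.subset hQ) a)).2
      ⟨b, mem_neighborsIn.2 ⟨h.subset hQ' hb, hab⟩, fun hmem => hbQ (mem_neighborsIn.1 hmem).1⟩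
  have hQ2 := (h.isTightLink Q hQ).linkDegree_eq_two a ha
  have hS2 := hdeg a (h.subset hQ ha)
  rw [linkDegree] at hQ2 hS2
  omega

theorem HasTightPacking.exists_pairwise_pkgNonAdj (h : HasTightPacking G X Y S k)
    (hdeg : ∀ u ∈ S, linkDegree G X Y S u ≤ 2) :
    ∃ P : Fin k → PathPkg G, (∀ i, IsXYPath G X Y (P i)) ∧
      Pairwise fun i j => PkgNonAdj G (P i) (P j) := by
  obtain ⟨𝓟, h𝓟, hk⟩ := h
  obtain ⟨Q, hQ⟩ : ∃ Q : Fin k ↪ Finset V, ∀ i, Q i ∈ 𝓟 :=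
    ⟨(Fin.castLEEmb hk).trans (𝓟.equivFin.symm.toEmbedding.trans (.subtype _)), fun i => by simp⟩
  choose x hx y hy p hp hsupp using fun i => (h𝓟.isTightLink (Q i) (hQ i)).exists_path
  refine ⟨fun i => ⟨x i, y i, p i⟩, fun i => ⟨hp i, hx i, hy i⟩, fun i j hij a ha b hb => ?_⟩
  have ha : a ∈ Q i := (hsupp i a).1 ha
  have hb : b ∈ Q j := (hsupp j b).1 hb
  have hne : Q i ≠ Q j := Q.injective.ne hij
  refine ⟨?_, h𝓟.not_adj hdeg (hQ i) (hQ j) hne ha hb⟩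
  rintro rfl
  exact hne (h𝓟.disjoint.elim_finset (hQ i) (hQ j) a ha hb)

end Enforce

theorem statement_11 (r : ℕ) :
    ∃ c : ℝ, 0 < c ∧
      ∀ (W : Type u) (G : SimpleGraph W) (X Y : Set W) (k : ℕ),
        ¬ HasTopKMinor G r →
        (∃ P : Fin k → PathPkg G,
            (∀ i, IsXYPath G X Y (P i)) ∧
            Pairwise fun i j => PkgNonAdj G (P i) (P j)) ∨
        (∃ Z : Set W, Z.Finite ∧ (Z.ncard : ℝ) < c * k ∧ XYSeparates G X Y Z) := by
  refine ⟨packingCost r, Nat.cast_pos.2 (packingCost_pos r), fun W G X Y k hG => ?_⟩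
  rcases menger G X Y (packingCost r * k) with hlinkage | ⟨Z, hZ, hsep⟩
  · left
    obtain ⟨S, hS⟩ := hlinkage.exists_hasTightPacking
    obtain ⟨S', hS', hdeg⟩ := hS.exists_linkDegree_le_two hG
    exact hS'.exists_pairwise_pkgNonAdj hdeg
  · right
    refine ⟨Z, Z.finite_toSet, ?_, xySeparates_of_not_linkedIn hsep⟩
    rw [Set.ncard_coe_finset]
    exact_mod_cast hZ
end

section
/- Let G be a simple graph and let 𝒫 be a collection of pairwise disjoint paths in G such that every vertex of V(𝒫) is incident to at most one edge of E(G) \ E(𝒫). Let F be the set of edges of G[V(𝒫)] not lying on any path of 𝒫, and let H be the graph whose vertex set is F, with two edges e₁, e₂ ∈ F adjacent in H if and only if the distance between e₁ and e₂ in G is exactly 1. Then H has maximum degree at most 4, H has no 4-regular subgraph, and consequently H is 3-degenerate and admits a proper vertex colouring with four colours. -/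
open SimpleGraph

universe u

variable {V : Type u}

/-!
The edges of `F` form a matching, and two of them at distance one are joined by an edge of a path.
Hence `H` is a subgraph of what remains of the union `L` of the paths after contracting each edge
of `F`. If `L` has maximum degree at most `k` and is `d`-degenerate, such a contraction has maximum
degree at most `2k` and is `(d + k)`-degenerate: some vertex covered by the given edges has at most
`d` covered `L`-neighbours, and the other end of its edge has at most `k`. A union of disjoint
paths has `k = 2` and `d = 1`, the latter because the first vertex of a path in a given set has at
most its successor as a neighbour in that set.
-/

section Degenerate

/-- Degeneracy: every nonempty set of vertices `S`, finite or not, contains a vertex with at most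
`d` neighbours in `S`. This is the usual notion with only induced subgraphs considered, which
suffices since they have the largest degrees. -/
def IsDegenerate (G : SimpleGraph V) (d : ℕ) : Prop :=
  ∀ S : Set V, S.Nonempty → ∃ v ∈ S, (G.neighborSet v ∩ S).encard ≤ d

variable {G : SimpleGraph V} {d : ℕ}

lemma IsDegenerate.exists_encard_subgraph_neighborSet_le (hG : IsDegenerate G d)
    (G' : G.Subgraph) (hne : G'.verts.Nonempty) :
    ∃ v ∈ G'.verts, (G'.neighborSet v).encard ≤ d := by
  obtain ⟨v, hv, hcard⟩ := hG G'.verts hne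
  have hsub : G'.neighborSet v ⊆ G.neighborSet v ∩ G'.verts :=
    fun w hw ↦ ⟨hw.adj_sub, hw.snd_mem⟩
  exact ⟨v, hv, (Set.encard_le_encard hsub).trans hcard⟩

lemma exists_forall_ne_of_encard_le {N : Set V} (hN : N.encard ≤ d) (c : V → Fin (d + 1)) :
    ∃ k, ∀ w ∈ N, c w ≠ k := by
  by_contra! hsurj
  have huniv : c '' N = Set.univ := Set.eq_univ_of_forall hsurj
  have hle : ((d + 1 : ℕ) : ℕ∞) ≤ d := calc
    ((d + 1 : ℕ) : ℕ∞) = (c '' N).encard := by simp [huniv]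
    _ ≤ N.encard := Set.encard_image_le c N
    _ ≤ d := hN
  exact absurd (Nat.cast_le.mp hle) (by omega)

lemma IsDegenerate.exists_coloring_on_finset (hG : IsDegenerate G d) (S : Finset V) :
    ∃ c : V → Fin (d + 1), ∀ v ∈ S, ∀ w ∈ S, G.Adj v w → c v ≠ c w := by
  classical
  induction S using Finset.strongInduction with
  | H S ih =>
    obtain rfl | hne := S.eq_empty_or_nonempty
    · exact ⟨fun _ ↦ 0, by simp⟩
    obtain ⟨u, hu, hcard⟩ := hG S hne
    obtain ⟨c, hc⟩ := ih (S.erase u) (Finset.erase_ssubset hu)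
    obtain ⟨k, hk⟩ := exists_forall_ne_of_encard_le hcard c
    refine ⟨Function.update c u k, fun v hv w hw hvw ↦ ?_⟩
    obtain rfl | hvu := eq_or_ne v u
    · simpa [hvw.ne'] using (hk w ⟨hvw, hw⟩).symm
    obtain rfl | hwu := eq_or_ne w u
    · simpa [hvu] using hk v ⟨hvw.symm, hv⟩
    simpa [hvu, hwu] using
      hc v (Finset.mem_erase.mpr ⟨hvu, hv⟩) w (Finset.mem_erase.mpr ⟨hwu, hw⟩) hvw

theorem IsDegenerate.colorable (hG : IsDegenerate G d) : G.Colorable (d + 1) := by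
  refine nonempty_hom_of_forall_finite_subgraph_hom fun G' hfin ↦ ?_
  choose c hc using hG.exists_coloring_on_finset
  exact ⟨fun v ↦ c hfin.toFinset v, fun {v w} hvw ↦
    hc hfin.toFinset v (by simp) w (by simp) (G'.adj_sub hvw)⟩

end Degenerate

section MatchingContraction

variable {α : Type*}

lemma encard_setOf_inter_nonempty_le {f : α → Set V}
    (hf : Pairwise fun a b ↦ Disjoint (f a) (f b)) (T : Set V) :
    {a | (f a ∩ T).Nonempty}.encard ≤ T.encard := by
  choose g hgf hgT using fun a : {a | (f a ∩ T).Nonempty} ↦ a.2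
  have hinj : Function.Injective fun a ↦ (⟨g a, hgT a⟩ : T) := by
    intro a b hab
    have heq : g a = g b := congrArg Subtype.val hab
    exact Subtype.ext (hf.eq (Set.not_disjoint_iff.mpr ⟨g a, hgf a, heq ▸ hgf b⟩))
  exact ENat.card_le_card_of_injective hinj

variable {H : SimpleGraph α} {L : SimpleGraph V} {f : α → Sym2 V} {k d : ℕ}

lemma encard_neighborSet_inter_le_add
    (hf : Pairwise fun a b ↦ Disjoint (f a : Set V) (f b))
    (hadj : ∀ a b, H.Adj a b → ∃ x ∈ f a, ∃ y ∈ f b, L.Adj x y)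
    (S : Set α) {a : α} {x y : V} (ha : f a = s(x, y)) :
    (H.neighborSet a ∩ S).encard ≤ (L.neighborSet x ∩ ⋃ b ∈ S, (f b : Set V)).encard +
      (L.neighborSet y ∩ ⋃ b ∈ S, (f b : Set V)).encard := by
  set U := ⋃ b ∈ S, (f b : Set V)
  set T := (L.neighborSet x ∩ U) ∪ (L.neighborSet y ∩ U)
  have hsub : H.neighborSet a ∩ S ⊆ {b | ((f b : Set V) ∩ T).Nonempty} := by
    rintro b ⟨hab, hbS⟩
    obtain ⟨v, hv, w, hw, hvw⟩ := hadj a b hab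
    have hwU : w ∈ U := Set.mem_biUnion hbS hw
    rw [ha, Sym2.mem_iff] at hv
    obtain rfl | rfl := hv
    · exact ⟨w, hw, .inl ⟨hvw, hwU⟩⟩
    · exact ⟨w, hw, .inr ⟨hvw, hwU⟩⟩
  calc (H.neighborSet a ∩ S).encard
      ≤ {b | ((f b : Set V) ∩ T).Nonempty}.encard := Set.encard_le_encard hsub
    _ ≤ T.encard := encard_setOf_inter_nonempty_le hf T
    _ ≤ _ := Set.encard_union_le _ _

theorem encard_neighborSet_le_of_contraction
    (hf : Pairwise fun a b ↦ Disjoint (f a : Set V) (f b))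
    (hadj : ∀ a b, H.Adj a b → ∃ x ∈ f a, ∃ y ∈ f b, L.Adj x y)
    (hdeg : ∀ v, (L.neighborSet v).encard ≤ k) (a : α) :
    (H.neighborSet a).encard ≤ (2 * k : ℕ) := by
  obtain ⟨x, y, ha⟩ : ∃ x y, f a = s(x, y) := (f a).ind fun x y ↦ ⟨x, y, rfl⟩
  have hle := encard_neighborSet_inter_le_add hf hadj Set.univ ha
  rw [Set.inter_univ] at hle
  calc (H.neighborSet a).encard ≤ _ := hle
    _ ≤ k + k := by gcongr <;> exact (Set.encard_le_encard Set.inter_subset_left).trans (hdeg _)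
    _ = (2 * k : ℕ) := by push_cast; ring

theorem IsDegenerate.of_contraction
    (hf : Pairwise fun a b ↦ Disjoint (f a : Set V) (f b))
    (hadj : ∀ a b, H.Adj a b → ∃ x ∈ f a, ∃ y ∈ f b, L.Adj x y)
    (hdeg : ∀ v, (L.neighborSet v).encard ≤ k) (hL : IsDegenerate L d) :
    IsDegenerate H (d + k) := by
  rintro S ⟨b, hb⟩
  have hcovered : (⋃ b ∈ S, (f b : Set V)).Nonempty :=
    ⟨_, Set.mem_biUnion hb (f b).out_fst_mem⟩
  obtain ⟨x, hxU, hx⟩ := hL _ hcovered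
  obtain ⟨a, haS, hxa⟩ := Set.mem_iUnion₂.mp hxU
  obtain ⟨y, ha⟩ : ∃ y, f a = s(x, y) := hxa
  refine ⟨a, haS, (encard_neighborSet_inter_le_add hf hadj S ha).trans ?_⟩
  push_cast
  gcongr
  exact (Set.encard_le_encard Set.inter_subset_left).trans (hdeg y)

end MatchingContraction

section PathSystem

variable {G : SimpleGraph V} {ι : Type*} {P : ι → PathPkg G}

lemma eq_getVert_of_mem_edges {x y w : V} {p : G.Walk x y} (hp : p.IsPath) {n : ℕ}
    (hn : n ≤ p.length) (h : s(p.getVert n, w) ∈ p.edges) :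
    (1 ≤ n ∧ w = p.getVert (n - 1)) ∨ w = p.getVert (n + 1) := by
  obtain ⟨m, hm, heq⟩ := p.mk_mem_edges_iff_exists.mp h
  obtain ⟨hfst, hsnd⟩ | ⟨hfst, hsnd⟩ := Sym2.eq_iff.mp heq
  · obtain rfl : m = n := hp.getVert_injOn hm.le hn hfst
    exact .inr hsnd.symm
  · obtain rfl : m + 1 = n := hp.getVert_injOn hm hn hsnd
    exact .inl ⟨by omega, hfst.symm⟩

/-- The union of a family of walks, as a graph on all of `V` in which the vertices on none of the
walks are isolated: the graph `L` whose degrees control those of `H`. -/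
def pathSystemGraph (P : ι → PathPkg G) : SimpleGraph V := fromEdgeSet (⋃ i, pkgEdges (P i))

lemma exists_mem_pkgEdges_of_adj {v w : V} (h : (pathSystemGraph P).Adj v w) :
    ∃ i, s(v, w) ∈ pkgEdges (P i) :=
  Set.mem_iUnion.mp ((fromEdgeSet_adj _).mp h).1

lemma mem_iUnion_pkgSupport_of_adj {v w : V} (h : (pathSystemGraph P).Adj v w) :
    v ∈ ⋃ i, pkgSupport (P i) := by
  obtain ⟨i, hi⟩ := exists_mem_pkgEdges_of_adj h
  exact Set.mem_iUnion.mpr ⟨i, (P i).2.2.fst_mem_support_of_mem_edges hi⟩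

lemma exists_getVert_of_mem_iUnion_pkgSupport {v : V} (hv : v ∈ ⋃ i, pkgSupport (P i)) :
    ∃ i, ∃ n ≤ (P i).2.2.length, (P i).2.2.getVert n = v := by
  obtain ⟨i, hi⟩ := Set.mem_iUnion.mp hv
  obtain ⟨n, hn, hle⟩ := Walk.mem_support_iff_exists_getVert.mp hi
  exact ⟨i, n, hle, hn⟩

lemma eq_getVert_of_pathSystemGraph_adj
    (hpath : ∀ i, (P i).2.2.IsPath) (hdisj : Pairwise fun i j ↦ PkgDisjoint (P i) (P j))
    {i : ι} {n : ℕ} (hn : n ≤ (P i).2.2.length) {w : V}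
    (h : (pathSystemGraph P).Adj ((P i).2.2.getVert n) w) :
    (1 ≤ n ∧ w = (P i).2.2.getVert (n - 1)) ∨ w = (P i).2.2.getVert (n + 1) := by
  obtain ⟨j, hj⟩ := exists_mem_pkgEdges_of_adj h
  obtain rfl : i = j := by
    by_contra hij
    exact hdisj hij _ ((P i).2.2.getVert_mem_support n)
      ((P j).2.2.fst_mem_support_of_mem_edges hj)
  exact eq_getVert_of_mem_edges (hpath i) hn hj

lemma encard_neighborSet_pathSystemGraph_le_two
    (hpath : ∀ i, (P i).2.2.IsPath) (hdisj : Pairwise fun i j ↦ PkgDisjoint (P i) (P j))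
    (v : V) :
    ((pathSystemGraph P).neighborSet v).encard ≤ 2 := by
  obtain hempty | ⟨u, hu⟩ := ((pathSystemGraph P).neighborSet v).eq_empty_or_nonempty
  · simp [hempty]
  obtain ⟨i, n, hn, rfl⟩ :=
    exists_getVert_of_mem_iUnion_pkgSupport (mem_iUnion_pkgSupport_of_adj hu)
  have hsub : (pathSystemGraph P).neighborSet ((P i).2.2.getVert n) ⊆
      {(P i).2.2.getVert (n - 1), (P i).2.2.getVert (n + 1)} := fun w hw ↦
    (eq_getVert_of_pathSystemGraph_adj hpath hdisj hn hw).imp And.right id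
  calc ((pathSystemGraph P).neighborSet ((P i).2.2.getVert n)).encard
      ≤ _ := Set.encard_le_encard hsub
    _ ≤ ({(P i).2.2.getVert (n + 1)} : Set V).encard + 1 := Set.encard_insert_le _ _
    _ = 2 := by rw [Set.encard_singleton, one_add_one_eq_two]

lemma isDegenerate_pathSystemGraph
    (hpath : ∀ i, (P i).2.2.IsPath) (hdisj : Pairwise fun i j ↦ PkgDisjoint (P i) (P j)) :
    IsDegenerate (pathSystemGraph P) 1 := by
  classical
  rintro S ⟨v, hvS⟩
  obtain hempty | ⟨u, hu⟩ := ((pathSystemGraph P).neighborSet v).eq_empty_or_nonempty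
  · exact ⟨v, hvS, by simp [hempty]⟩
  obtain ⟨i, m, hm, hmv⟩ :=
    exists_getVert_of_mem_iUnion_pkgSupport (mem_iUnion_pkgSupport_of_adj hu)
  have hmeets : ∃ n, n ≤ (P i).2.2.length ∧ (P i).2.2.getVert n ∈ S := ⟨m, hm, hmv ▸ hvS⟩
  obtain ⟨n, ⟨hn, hnS⟩, hfirst⟩ := Nat.findX hmeets
  have hsub : (pathSystemGraph P).neighborSet ((P i).2.2.getVert n) ∩ S ⊆
      {(P i).2.2.getVert (n + 1)} := by
    rintro w ⟨hw, hwS⟩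
    refine (eq_getVert_of_pathSystemGraph_adj hpath hdisj hn hw).resolve_left ?_
    rintro ⟨hpos, rfl⟩
    exact hfirst (n - 1) (by omega) ⟨by omega, hwS⟩
  exact ⟨_, hnS, (Set.encard_le_encard hsub).trans (Set.encard_singleton _).le⟩

end PathSystem

section NonPathEdges

variable {G : SimpleGraph V} {U : Set V} {E F : Set (Sym2 V)}

lemma pairwise_disjoint_of_subsingleton_incident
    (hinc : ∀ v ∈ U, Set.Subsingleton {e : Sym2 V | e ∈ G.edgeSet ∧ v ∈ e ∧ e ∉ E})
    (hF : F ⊆ {e | e ∈ G.edgeSet ∧ ∀ v, v ∈ e → v ∈ U} \ E) :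
    Pairwise fun e f : F ↦ Disjoint ((e : Sym2 V) : Set V) (f : Sym2 V) := by
  rintro ⟨e, he⟩ ⟨f, hf⟩ hne
  refine Set.disjoint_left.mpr fun v hve hvf ↦ hne (Subtype.ext ?_)
  obtain ⟨⟨heG, heU⟩, heE⟩ := hF he
  obtain ⟨⟨hfG, -⟩, hfE⟩ := hF hf
  exact hinc v (heU v hve) ⟨heG, hve, heE⟩ ⟨hfG, hvf, hfE⟩

lemma exists_fromEdgeSet_adj_of_adj
    (hinc : ∀ v ∈ U, Set.Subsingleton {e : Sym2 V | e ∈ G.edgeSet ∧ v ∈ e ∧ e ∉ E})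
    {e f : Sym2 V} (he : e ∈ {e | e ∈ G.edgeSet ∧ ∀ v, v ∈ e → v ∈ U} \ E)
    (hadj : ∃ a, a ∈ e ∧ ∃ b, b ∈ f ∧ G.Adj a b) (hdisj : ¬ ∃ a, a ∈ e ∧ a ∈ f) :
    ∃ x ∈ e, ∃ y ∈ f, (fromEdgeSet E).Adj x y := by
  obtain ⟨x, hx, y, hy, hxy⟩ := hadj
  obtain ⟨⟨heG, heU⟩, heE⟩ := he
  refine ⟨x, hx, y, hy, (fromEdgeSet_adj _).mpr ⟨?_, hxy.ne⟩⟩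
  by_contra hxyE
  have heq : s(x, y) = e :=
    hinc x (heU x hx) ⟨hxy, Sym2.mem_mk_left x y, hxyE⟩ ⟨heG, hx, heE⟩
  exact hdisj ⟨y, heq ▸ Sym2.mem_mk_right x y, hy⟩

end NonPathEdges

theorem statement_14 {ι : Type*} (G : SimpleGraph V) (P : ι → PathPkg G)
    (hpath : ∀ i, (P i).2.2.IsPath)
    (hdisj : Pairwise fun i j => PkgDisjoint (P i) (P j))
    (hinc : ∀ v, v ∈ (⋃ i, pkgSupport (P i)) →
      Set.Subsingleton {e : Sym2 V | e ∈ G.edgeSet ∧ v ∈ e ∧ e ∉ ⋃ i, pkgEdges (P i)})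
    (F : Set (Sym2 V))
    (hF : F = {e | e ∈ G.edgeSet ∧ ∀ v, v ∈ e → v ∈ ⋃ i, pkgSupport (P i)} \
      (⋃ i, pkgEdges (P i)))
    (H : SimpleGraph F)
    (hH : ∀ e₁ e₂ : F, H.Adj e₁ e₂ ↔
      ((∃ a, a ∈ (e₁ : Sym2 V) ∧ ∃ b, b ∈ (e₂ : Sym2 V) ∧ G.Adj a b) ∧
        ¬ ∃ a : V, a ∈ (e₁ : Sym2 V) ∧ a ∈ (e₂ : Sym2 V))) :
    (∀ e : F, (H.neighborSet e).Finite ∧ (H.neighborSet e).ncard ≤ 4) ∧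
    (¬ ∃ H' : H.Subgraph, H'.verts.Nonempty ∧
        ∀ v ∈ H'.verts, (H'.neighborSet v).Finite ∧ (H'.neighborSet v).ncard = 4) ∧
    (∀ H' : H.Subgraph, H'.verts.Nonempty →
        ∃ v ∈ H'.verts, (H'.neighborSet v).Finite ∧ (H'.neighborSet v).ncard ≤ 3) ∧
    (∃ c : F → Fin 4, ∀ e₁ e₂ : F, H.Adj e₁ e₂ → c e₁ ≠ c e₂) := by
  have hmatching := pairwise_disjoint_of_subsingleton_incident hinc hF.subset
  have hjoined : ∀ e f : F, H.Adj e f →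
      ∃ x ∈ (e : Sym2 V), ∃ y ∈ (f : Sym2 V), (pathSystemGraph P).Adj x y := fun e f hef ↦
    exists_fromEdgeSet_adj_of_adj hinc (hF.subset e.2) ((hH e f).mp hef).1 ((hH e f).mp hef).2
  have hdeg := encard_neighborSet_pathSystemGraph_le_two hpath hdisj
  have hdegenerate : IsDegenerate H 3 :=
    .of_contraction hmatching hjoined hdeg (isDegenerate_pathSystemGraph hpath hdisj)
  have hsubgraph : ∀ H' : H.Subgraph, H'.verts.Nonempty →
      ∃ v ∈ H'.verts, (H'.neighborSet v).Finite ∧ (H'.neighborSet v).ncard ≤ 3 := by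
    simpa only [Set.encard_le_coe_iff_finite_ncard_le] using
      hdegenerate.exists_encard_subgraph_neighborSet_le
  refine ⟨fun e ↦ ?_, ?_, hsubgraph, ?_⟩
  · exact Set.encard_le_coe_iff_finite_ncard_le.mp
      (encard_neighborSet_le_of_contraction hmatching hjoined hdeg e)
  · rintro ⟨H', hne, hregular⟩
    obtain ⟨v, hv, -, hle⟩ := hsubgraph H' hne
    have hfour := (hregular v hv).2
    omega
  · obtain ⟨c⟩ := hdegenerate.colorable
    exact ⟨c, fun _ _ hadj ↦ c.valid hadj⟩
end
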